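/- Let n ≥ 2 and let λ_1,…,λ_n be integers with 1 ≤ λ_j ≤ j for each 1 ≤ j ≤ n. Define the n-tuple of quadratic forms Q = (Q_1,…,Q_n) on ℝ^n by Q_j(ξ) = ξ_{λ_j} ξ_j, and for each 1 ≤ j ≤ n set w_j = #{1 ≤ i ≤ n : λ_i = j}. Then for all exponents p, q ∈ [1,∞] with q > max_j w_j + 3 and 1/p + (max_j w_j + 2)/q < 1, there exists a constant C = C(p,q,n,λ) such that ‖E^Q f‖_{L^q(ℝ^{2n})} ≤ C ‖f‖_{L^p([0,1]^n)} for every measurable function f : [0,1]^n → ℂ. -/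

import Mathlib

open MeasureTheory
open scoped ENNReal

/-- The extension operator associated to the quadratic surface
`S_Q = {(ξ, Q ξ) : ξ ∈ [0,1]^d} ⊆ ℝ^{d+n}`. -/
noncomputable def extOp (d n : ℕ) (Q : (Fin d → ℝ) → Fin n → ℝ)
    (f : (Fin d → ℝ) → ℂ) (x : Fin (d + n) → ℝ) : ℂ :=
  ∫ ξ in Set.Icc (0 : Fin d → ℝ) 1,
    Complex.exp (2 * (Real.pi : ℂ) * Complex.I *
      ((((∑ i : Fin d, x (Fin.castAdd n i) * ξ i) +
        ∑ j : Fin n, x (Fin.natAdd d j) * Q ξ j : ℝ)) : ℂ)) * f ξ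


open scoped FourierTransform ContDiff in
theorem aux_plancherel_ae {E : Type*} [NormedAddCommGroup E] [MeasurableSpace E] [BorelSpace E]
    [InnerProductSpace ℝ E] [FiniteDimensional ℝ E] (f : E → ℂ) (hf : Integrable f)
    (hf2 : MemLp f 2 volume) :
    ((𝓕 (hf2.toLp f) : Lp ℂ 2 (volume : Measure E)) : E → ℂ) =ᵐ[volume] 𝓕 f := by
  have hcont : Continuous (𝓕 f) :=
    VectorFourier.fourierIntegral_continuous Real.continuous_fourierChar
      (by exact continuous_inner) hf
  apply ae_eq_of_integral_contDiff_smul_eq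
  · exact (Lp.memLp _).locallyIntegrable (by norm_num)
  · exact hcont.locallyIntegrable
  intro g hg hgc
  have hg₁ : HasCompactSupport (Complex.ofRealCLM ∘ g) := hgc.comp_left rfl
  have hg₂ : ContDiff ℝ ∞ (Complex.ofRealCLM ∘ g) := by fun_prop
  set φ := hg₁.toSchwartzMap hg₂ with hφ
  have h1 := MeasureTheory.Lp.fourier_toTemperedDistribution_eq (hf2.toLp f)
  have h2 := congrArg (fun T => T φ) h1
  simp only [TemperedDistribution.fourier_apply, Lp.toTemperedDistribution_apply] at h2
  have h3 : ∫ x, (𝓕 φ) x • f x = ∫ x, φ x • 𝓕 f x := by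
    have := VectorFourier.integral_fourierIntegral_smul_eq_flip (μ := (volume : Measure E))
      (ν := (volume : Measure E)) (L := innerₗ E) Real.continuous_fourierChar
      (by exact continuous_inner) φ.integrable hf
    rw [flip_innerₗ] at this
    exact this
  have h4 : ∫ x, (𝓕 φ) x • (hf2.toLp f) x = ∫ x, (𝓕 φ) x • f x := by
    apply integral_congr_ae
    filter_upwards [hf2.coeFn_toLp] with x hx
    rw [hx]
  have h5 : ∀ (u : E → ℂ), ∫ x, φ x • u x = ∫ x, g x • u x := by
    intro u
    congr 1
  rw [← h5, ← h5, ← h2, h4, h3]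

open scoped FourierTransform in
theorem aux_plancherel_E {E : Type*} [NormedAddCommGroup E] [MeasurableSpace E] [BorelSpace E]
    [InnerProductSpace ℝ E] [FiniteDimensional ℝ E] (f : E → ℂ) (hf : Integrable f) :
    eLpNorm (𝓕 f) 2 volume ≤ eLpNorm f 2 volume := by
  by_cases hf2 : MemLp f 2 volume
  · rw [← eLpNorm_congr_ae (aux_plancherel_ae f hf hf2)]
    have h := Lp.norm_fourier_eq (hf2.toLp f)
    rw [Lp.norm_def, Lp.norm_toLp] at h
    rw [ENNReal.toReal_eq_toReal_iff' (Lp.eLpNorm_ne_top _) hf2.2.ne] at h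
    exact h.le
  · have : eLpNorm f 2 volume = ⊤ := by
      by_contra hne
      exact hf2 ⟨hf.1, lt_top_iff_ne_top.2 hne⟩
    rw [this]; exact le_top

/-- Plancherel inequality on `ι → ℝ`. -/
theorem aux_plancherel {ι : Type*} [Fintype ι] (F : (ι → ℝ) → ℂ) (hF : Integrable F) :
    ∫⁻ X : ι → ℝ, ‖∫ z, Complex.exp (2 * (Real.pi : ℂ) * Complex.I *
      ((∑ i, X i * z i : ℝ) : ℂ)) * F z‖ₑ ^ (2 : ℝ) ≤ ∫⁻ z, ‖F z‖ₑ ^ (2 : ℝ) := by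
  have hmp := PiLp.volume_preserving_ofLp ι
  have hme : MeasurableEmbedding (WithLp.ofLp : EuclideanSpace ℝ ι → (ι → ℝ)) :=
    (MeasurableEquiv.toLp 2 (ι → ℝ)).symm.measurableEmbedding
  have hG : Integrable (fun v : EuclideanSpace ℝ ι => F v.ofLp) :=
    (hmp.integrable_comp_emb hme).2 hF
  have h := aux_plancherel_E _ hG
  rw [eLpNorm_eq_lintegral_rpow_enorm_toReal (by norm_num) (by norm_num),
    eLpNorm_eq_lintegral_rpow_enorm_toReal (by norm_num) (by norm_num)] at h
  rw [ENNReal.rpow_le_rpow_iff (by norm_num)] at h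
  simp only [ENNReal.toReal_ofNat] at h
  rw [← (hmp.lintegral_comp_emb hme (fun z => ‖F z‖ₑ ^ (2 : ℝ)))]
  refine le_trans (le_of_eq ?_) h
  rw [← hmp.lintegral_comp_emb hme]
  rw [← (LinearIsometryEquiv.neg ℝ (E := EuclideanSpace ℝ ι)).measurePreserving.lintegral_comp_emb
    (LinearIsometryEquiv.neg ℝ (E := EuclideanSpace ℝ ι)).toHomeomorph.measurableEmbedding]
  refine lintegral_congr fun w => ?_
  congr 2
  rw [← hmp.integral_comp hme, Real.fourier_eq']
  refine integral_congr_ae (Filter.Eventually.of_forall fun v => ?_)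
  simp only [smul_eq_mul]
  congr 2
  simp only [LinearIsometryEquiv.coe_neg, inner_neg_right, PiLp.inner_apply, PiLp.neg_apply]
  push_cast
  simp [Finset.mul_sum, Finset.sum_mul]
  try (refine Finset.sum_congr rfl fun i _ => ?_; ring)


theorem aux_change {ι : Type*} [Fintype ι] (Ω : Set (ι → ℝ)) (hΩ : MeasurableSet Ω)
    (Φ : (ι → ℝ) → (ι → ℝ)) (Φ' : (ι → ℝ) → ((ι → ℝ) →L[ℝ] (ι → ℝ)))
    (hΦ : ∀ z ∈ Ω, HasFDerivWithinAt Φ (Φ' z) Ω z) (hinj : Set.InjOn Φ Ω)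
    (c : ℝ) (hc : 0 < c) (hdet : ∀ z ∈ Ω, c ≤ |(Φ' z).det|)
    (H : (ι → ℝ) → ℂ) (hH : IntegrableOn H Ω) :
    ∫⁻ X : ι → ℝ, ‖∫ z in Ω, Complex.exp (2 * (Real.pi : ℂ) * Complex.I *
      ((∑ i, X i * Φ z i : ℝ) : ℂ)) * H z‖ₑ ^ (2 : ℝ) ≤
      ENNReal.ofReal c⁻¹ * ∫⁻ z in Ω, ‖H z‖ₑ ^ (2 : ℝ) := by
  classical
  set inv := Function.invFunOn Φ Ω with hinv
  have hleft : ∀ z ∈ Ω, inv (Φ z) = z := fun z hz => hinj.leftInvOn_invFunOn hz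
  set G : (ι → ℝ) → ℂ := fun w => (|(Φ' (inv w)).det|)⁻¹ • H (inv w) with hG
  set F : (ι → ℝ) → ℂ := (Φ '' Ω).indicator G with hF
  have hmeas : MeasurableSet (Φ '' Ω) := by
    exact measurable_image_of_fderivWithin hΩ hΦ hinj
  have hGz : ∀ z ∈ Ω, |(Φ' z).det| • G (Φ z) = H z := by
    intro z hz
    have : |(Φ' z).det| ≠ 0 := (lt_of_lt_of_le hc (hdet z hz)).ne'
    simp only [hG, hleft z hz, smul_smul, mul_inv_cancel₀ this, one_smul]
  have hGint : IntegrableOn G (Φ '' Ω) := by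
    rw [integrableOn_image_iff_integrableOn_abs_det_fderiv_smul volume hΩ hΦ hinj]
    exact hH.congr_fun (fun z hz => (hGz z hz).symm) hΩ
  have hFint : Integrable F := (integrable_indicator_iff hmeas).2 hGint
  have h := aux_plancherel F hFint
  have e1 : ∀ X : ι → ℝ, ∫ z, Complex.exp (2 * (Real.pi : ℂ) * Complex.I *
      ((∑ i, X i * z i : ℝ) : ℂ)) * F z = ∫ z in Ω, Complex.exp (2 * (Real.pi : ℂ) * Complex.I *
      ((∑ i, X i * Φ z i : ℝ) : ℂ)) * H z := by
    intro X
    have : ∀ z, Complex.exp (2 * (Real.pi : ℂ) * Complex.I *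
      ((∑ i, X i * z i : ℝ) : ℂ)) * F z = (Φ '' Ω).indicator (fun z => Complex.exp (2 * (Real.pi : ℂ) * Complex.I *
      ((∑ i, X i * z i : ℝ) : ℂ)) * G z) z := by
      intro z
      by_cases hz : z ∈ Φ '' Ω <;> simp [hF, hz]
    simp_rw [this]
    rw [integral_indicator hmeas, integral_image_eq_integral_abs_det_fderiv_smul volume hΩ hΦ hinj]
    refine setIntegral_congr_fun hΩ fun z hz => ?_
    rw [← hGz z hz]
    exact (mul_smul_comm _ _ _).symm
  simp_rw [e1] at h
  refine h.trans ?_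
  have e2 : ∫⁻ z, ‖F z‖ₑ ^ (2 : ℝ) = ∫⁻ z in Φ '' Ω, ‖G z‖ₑ ^ (2 : ℝ) := by
    rw [← lintegral_indicator hmeas]
    refine lintegral_congr fun z => ?_
    by_cases hz : z ∈ Φ '' Ω <;> simp [hF, hz]
  rw [e2, lintegral_image_eq_lintegral_abs_det_fderiv_mul volume hΩ hΦ hinj,
    ← lintegral_const_mul' _ _ ENNReal.ofReal_ne_top]
  refine setLIntegral_mono' hΩ fun z hz => ?_
  have hd := hdet z hz
  have hpos : 0 < |(Φ' z).det| := lt_of_lt_of_le hc hd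
  have hGe : ‖G (Φ z)‖ₑ = ENNReal.ofReal (|(Φ' z).det|⁻¹) * ‖H z‖ₑ := by
    simp only [hG, hleft z hz]
    rw [enorm_smul, Real.enorm_eq_ofReal (by positivity)]
  rw [hGe, ENNReal.mul_rpow_of_nonneg _ _ (by norm_num), ← mul_assoc]
  gcongr
  rw [ENNReal.ofReal_rpow_of_nonneg (by positivity) (by norm_num),
    ← ENNReal.ofReal_mul (by positivity)]
  apply ENNReal.ofReal_le_ofReal
  rw [Real.rpow_two, pow_two, ← mul_assoc, mul_inv_cancel₀ hpos.ne', one_mul]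
  exact inv_anti₀ hc hd

/-- the phase function -/
noncomputable def phs {n : ℕ} (lam : Fin n → Fin n) (x y ξ : Fin n → ℝ) : ℝ :=
  (∑ i, x i * ξ i) + ∑ j, y j * (ξ (lam j) * ξ j)

/-- the extension operator with separated variables -/
noncomputable def EE {n : ℕ} (lam : Fin n → Fin n) (f : (Fin n → ℝ) → ℂ) (x y : Fin n → ℝ) : ℂ :=
  ∫ ξ, Complex.exp (2 * (Real.pi : ℂ) * Complex.I * ((phs lam x y ξ : ℝ) : ℂ)) * f ξ

theorem norm_aux_exp (t : ℝ) : ‖Complex.exp (2 * (Real.pi : ℂ) * Complex.I * (t : ℂ))‖ = 1 := by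
  have : (2 * (Real.pi : ℂ) * Complex.I * (t : ℂ)) = ((2 * Real.pi * t : ℝ) : ℂ) * Complex.I := by
    push_cast; ring
  rw [this, Complex.norm_exp_ofReal_mul_I]

theorem continuous_phs {n : ℕ} (lam : Fin n → Fin n) :
    Continuous (fun p : ((Fin n → ℝ) × (Fin n → ℝ)) × (Fin n → ℝ) => phs lam p.1.1 p.1.2 p.2) := by
  unfold phs
  fun_prop

theorem measurable_EE {n : ℕ} (lam : Fin n → Fin n) (f : (Fin n → ℝ) → ℂ) (hf : Measurable f) :
    Measurable (fun p : (Fin n → ℝ) × (Fin n → ℝ) => EE lam f p.1 p.2) := by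
  unfold EE
  apply StronglyMeasurable.measurable
  apply StronglyMeasurable.integral_prod_right (f := fun (p : (Fin n → ℝ) × (Fin n → ℝ)) ξ => Complex.exp (2 * (Real.pi : ℂ) * Complex.I * ((phs lam p.1 p.2 ξ : ℝ) : ℂ)) * f ξ)
  apply Measurable.stronglyMeasurable
  have h := (continuous_phs lam)
  have h1 : Continuous (fun p : ((Fin n → ℝ) × (Fin n → ℝ)) × (Fin n → ℝ) => Complex.exp (2 * (Real.pi : ℂ) * Complex.I * ((phs lam p.1.1 p.1.2 p.2 : ℝ) : ℂ))) := by
    fun_prop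
  exact h1.measurable.mul (hf.comp measurable_snd)

theorem integrable_EE {n : ℕ} (lam : Fin n → Fin n) (f : (Fin n → ℝ) → ℂ) (hf : Integrable f)
    (x y : Fin n → ℝ) :
    Integrable (fun ξ => Complex.exp (2 * (Real.pi : ℂ) * Complex.I * ((phs lam x y ξ : ℝ) : ℂ)) * f ξ) := by
  have h := (continuous_phs lam)
  have h1 : Continuous (fun ξ : (Fin n → ℝ) => Complex.exp (2 * (Real.pi : ℂ) * Complex.I * ((phs lam x y ξ : ℝ) : ℂ))) := by
    have : Continuous (fun ξ : (Fin n → ℝ) => phs lam x y ξ) := h.comp (by fun_prop : Continuous fun ξ : (Fin n → ℝ) => ((x, y), ξ))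
    fun_prop
  refine hf.bdd_mul h1.aestronglyMeasurable (c := 1) ?_
  exact Filter.Eventually.of_forall fun ξ => (norm_aux_exp _).le

theorem enorm_EE_le {n : ℕ} (lam : Fin n → Fin n) (f : (Fin n → ℝ) → ℂ) (x y : Fin n → ℝ) :
    ‖EE lam f x y‖ₑ ≤ ∫⁻ ξ, ‖f ξ‖ₑ := by
  refine (enorm_integral_le_lintegral_enorm _).trans (le_of_eq ?_)
  refine lintegral_congr fun ξ => ?_
  rw [enorm_mul, ← ofReal_norm, norm_aux_exp]; simp

/-- fixed `y` Plancherel -/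
theorem EE_plancherel {n : ℕ} (lam : Fin n → Fin n) (f : (Fin n → ℝ) → ℂ) (hf : Integrable f)
    (y : Fin n → ℝ) : ∫⁻ x, ‖EE lam f x y‖ₑ ^ (2 : ℝ) ≤ ∫⁻ ξ, ‖f ξ‖ₑ ^ (2 : ℝ) := by
  have h := aux_plancherel (fun ξ => Complex.exp (2 * (Real.pi : ℂ) * Complex.I * ((phs lam 0 y ξ : ℝ) : ℂ)) * f ξ) (integrable_EE lam f hf 0 y)
  refine le_trans (le_of_eq ?_) (h.trans (le_of_eq ?_))
  · refine lintegral_congr fun x => ?_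
    unfold EE
    congr 2
    refine integral_congr_ae (Filter.Eventually.of_forall fun ξ => ?_)
    simp only
    rw [← mul_assoc, ← Complex.exp_add]
    congr 2
    simp only [phs]
    push_cast
    simp
    ring
  · refine lintegral_congr fun ξ => ?_
    rw [enorm_mul, ← ofReal_norm (Complex.exp _), norm_aux_exp]; simp


/-- The matrix of the differential of `ξ ↦ (ξ_{λ_j} ξ_j)_j`. -/
def DQ {n : ℕ} (lam : Fin n → Fin n) (ξ : Fin n → ℝ) : Matrix (Fin n) (Fin n) ℝ :=
  Matrix.of fun j k => (if k = j then ξ (lam j) else 0) + (if k = lam j then ξ j else 0)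

theorem DQ_det {n : ℕ} (lam : Fin n → Fin n) (hlam : ∀ j, (lam j : ℕ) ≤ (j : ℕ))
    (ζ : Fin n → ℝ) (δ : ℝ) (hδ : 0 < δ) (hζ : ∀ j, δ ≤ |ζ j|) :
    δ ^ n ≤ |(DQ lam ζ).det| := by
  rw [Matrix.det_of_isLowerTriangular, Finset.abs_prod]
  · have : δ ^ n = ∏ _j : Fin n, δ := by simp
    rw [this]
    refine Finset.prod_le_prod (fun _ _ => hδ.le) fun j _ => ?_
    simp only [DQ, Matrix.of_apply, if_true]
    split_ifs with h
    · rw [← h, ← two_mul, abs_mul, abs_two]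
      have := hζ j
      linarith [abs_nonneg (ζ j)]
    · simpa using hζ (lam j)
  · intro i j hij
    have hij' : i < j := hij
    have h1 : ¬ (j = i) := hij'.ne'
    have h2 : ¬ (j = lam i) := by
      intro h
      have := hlam i
      rw [← h] at this
      exact absurd hij' (not_lt.2 this)
    simp [DQ, h1, h2]

/-- the bilinear change of variables -/
def Phi {n : ℕ} (lam : Fin n → Fin n) (z : Fin n ⊕ Fin n → ℝ) : Fin n ⊕ Fin n → ℝ :=
  Sum.elim (fun i => z (Sum.inl i) + z (Sum.inr i))
    (fun j => z (Sum.inl (lam j)) * z (Sum.inl j) + z (Sum.inr (lam j)) * z (Sum.inr j))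

/-- matrix of its differential -/
def PhiM {n : ℕ} (lam : Fin n → Fin n) (z : Fin n ⊕ Fin n → ℝ) :
    Matrix (Fin n ⊕ Fin n) (Fin n ⊕ Fin n) ℝ :=
  Matrix.fromBlocks 1 1 (DQ lam (fun i => z (Sum.inl i))) (DQ lam (fun i => z (Sum.inr i)))

theorem PhiM_det {n : ℕ} (lam : Fin n → Fin n) (z : Fin n ⊕ Fin n → ℝ) :
    (PhiM lam z).det = (DQ lam (fun i => z (Sum.inr i) - z (Sum.inl i))).det := by
  rw [PhiM, Matrix.det_fromBlocks_one₁₁, Matrix.mul_one]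
  congr 1
  ext j k
  simp only [DQ, Matrix.sub_apply, Matrix.of_apply]
  split_ifs <;> ring

theorem Phi_hasFDerivAt {n : ℕ} (lam : Fin n → Fin n) (z : Fin n ⊕ Fin n → ℝ) :
    HasFDerivAt (Phi lam) (LinearMap.toContinuousLinearMap (Matrix.toLin' (PhiM lam z))) z := by
  rw [hasFDerivAt_pi']
  have hp : ∀ a : Fin n ⊕ Fin n, HasFDerivAt (fun z : Fin n ⊕ Fin n → ℝ => z a)
    (ContinuousLinearMap.proj (R := ℝ) (φ := fun _ : Fin n ⊕ Fin n => ℝ) a) z := fun a => hasFDerivAt_apply a z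
  rintro (i | j)
  · refine HasFDerivAt.congr_fderiv ((hp (Sum.inl i)).add (hp (Sum.inr i))) ?_
    ext v
    simp [PhiM, Matrix.mulVec, dotProduct, Matrix.fromBlocks, Matrix.one_apply]
  · refine HasFDerivAt.congr_fderiv (((hp (Sum.inl (lam j))).mul (hp (Sum.inl j))).add
      ((hp (Sum.inr (lam j))).mul (hp (Sum.inr j)))) ?_
    ext v
    simp [PhiM, Matrix.mulVec, dotProduct, Matrix.fromBlocks, DQ, add_mul, Finset.sum_add_distrib]

theorem Phi_inj {n : ℕ} (lam : Fin n → Fin n) (hlam : ∀ j, (lam j : ℕ) ≤ (j : ℕ))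
    (σ : Fin n → ℝ) (δ : ℝ) (hδ : 0 < δ) :
    Set.InjOn (Phi lam) {z | ∀ j, δ ≤ σ j * (z (Sum.inl j) - z (Sum.inr j))} := by
  intro z hz z' hz' h
  have hu : ∀ i, z (Sum.inl i) + z (Sum.inr i) = z' (Sum.inl i) + z' (Sum.inr i) := fun i =>
    congrFun h (Sum.inl i)
  have hv : ∀ j, z (Sum.inl (lam j)) * z (Sum.inl j) + z (Sum.inr (lam j)) * z (Sum.inr j) =
      z' (Sum.inl (lam j)) * z' (Sum.inl j) + z' (Sum.inr (lam j)) * z' (Sum.inr j) := fun j =>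
    congrFun h (Sum.inr j)
  have key : ∀ m : ℕ, ∀ j : Fin n, (j : ℕ) = m →
      z (Sum.inl j) - z (Sum.inr j) = z' (Sum.inl j) - z' (Sum.inr j) := by
    intro m
    induction m using Nat.strong_induction_on with
    | _ m ih =>
      intro j hj
      have hzz : (z (Sum.inl (lam j)) - z (Sum.inr (lam j))) * (z (Sum.inl j) - z (Sum.inr j)) =
        (z' (Sum.inl (lam j)) - z' (Sum.inr (lam j))) * (z' (Sum.inl j) - z' (Sum.inr j)) := by
        have a := hu j
        have b := hu (lam j)
        have c := hv j
        have d : (z (Sum.inl (lam j)) + z (Sum.inr (lam j))) * (z (Sum.inl j) + z (Sum.inr j)) =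
          (z' (Sum.inl (lam j)) + z' (Sum.inr (lam j))) * (z' (Sum.inl j) + z' (Sum.inr j)) := by
          rw [a, b]
        linear_combination 2 * c - d
      by_cases hl : lam j = j
      · rw [hl] at hzz
        have a := hz j
        have b := hz' j
        rcases mul_self_eq_mul_self_iff.1 hzz with h1 | h1
        · exact h1
        · rw [h1] at a
          nlinarith
      · have hlt : (lam j : ℕ) < m := by
          rw [← hj]
          exact lt_of_le_of_ne (hlam j) (fun h => hl (Fin.ext h))
        have e := ih _ hlt (lam j) rfl
        rw [← e] at hzz
        refine mul_left_cancel₀ ?_ hzz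
        intro h0
        have := hz (lam j)
        rw [h0] at this
        linarith
  ext (i | i)
  · linarith [hu i, key _ i rfl]
  · linarith [hu i, key _ i rfl]

theorem lintegral_sum_pi {n : ℕ} (G : (Fin n ⊕ Fin n → ℝ) → ℝ≥0∞) (hG : Measurable G) :
    ∫⁻ X, G X = ∫⁻ y : Fin n → ℝ, ∫⁻ x : Fin n → ℝ, G (Sum.elim x y) := by
  have hmp := volume_measurePreserving_sumPiEquivProdPi_symm (fun _ : Fin n ⊕ Fin n => ℝ)
  rw [← hmp.lintegral_comp_emb (MeasurableEquiv.measurableEmbedding _), Measure.volume_eq_prod,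
    lintegral_prod_symm]
  · rfl
  · exact (hG.comp (MeasurableEquiv.measurable _)).aemeasurable

theorem bilinear {n : ℕ} (lam : Fin n → Fin n) (hlam : ∀ j, (lam j : ℕ) ≤ (j : ℕ))
    (f g : (Fin n → ℝ) → ℂ) (hf : Measurable f) (hg : Measurable g)
    (hfi : Integrable f) (hgi : Integrable g)
    (σ : Fin n → ℝ) (hσ : ∀ j, |σ j| = 1) (δ : ℝ) (hδ : 0 < δ)
    (hsep : ∀ ξ η, f ξ ≠ 0 → g η ≠ 0 → ∀ j, δ ≤ σ j * (ξ j - η j)) :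
    ∫⁻ y, ∫⁻ x, (‖EE lam f x y‖ₑ * ‖EE lam g x y‖ₑ) ^ (2 : ℝ) ≤
      ENNReal.ofReal (δ ^ n)⁻¹ * ((∫⁻ ξ, ‖f ξ‖ₑ ^ (2 : ℝ)) * ∫⁻ ξ, ‖g ξ‖ₑ ^ (2 : ℝ)) := by
  have hmp := volume_measurePreserving_sumPiEquivProdPi_symm (fun _ : Fin n ⊕ Fin n => ℝ)
  have hme : MeasurableEmbedding (MeasurableEquiv.sumPiEquivProdPi (fun _ : Fin n ⊕ Fin n => ℝ)).symm :=
    MeasurableEquiv.measurableEmbedding _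
  set Ω : Set (Fin n ⊕ Fin n → ℝ) := {z | ∀ j, δ ≤ σ j * (z (Sum.inl j) - z (Sum.inr j))} with hΩ
  have hΩm : MeasurableSet Ω := by
    rw [hΩ, Set.ofPred_forall]
    refine MeasurableSet.iInter fun j => ?_
    exact measurableSet_le measurable_const (by fun_prop)
  set H : (Fin n ⊕ Fin n → ℝ) → ℂ := fun z => f (fun i => z (Sum.inl i)) * g (fun i => z (Sum.inr i)) with hH
  have hHm : Measurable H := by
    refine (hf.comp ?_).mul (hg.comp ?_) <;> exact measurable_pi_lambda _ fun i => measurable_pi_apply _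
  have hHi : Integrable H := by
    rw [← hmp.integrable_comp_emb hme]
    exact hfi.mul_prod hgi
  have hH0 : ∀ z, z ∉ Ω → H z = 0 := by
    intro z hz
    by_contra hne
    exact hz (hsep _ _ (left_ne_zero_of_mul hne) (right_ne_zero_of_mul hne))
  have h := aux_change Ω hΩm (Phi lam) (fun z => LinearMap.toContinuousLinearMap (Matrix.toLin' (PhiM lam z)))
    (fun z _ => (Phi_hasFDerivAt lam z).hasFDerivWithinAt) (Phi_inj lam hlam σ δ hδ) (δ ^ n) (by positivity)
    (by
      intro z hz
      rw [LinearMap.det_toContinuousLinearMap, LinearMap.det_toLin', PhiM_det]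
      refine DQ_det lam hlam _ δ hδ fun j => ?_
      have := hz j
      rw [abs_sub_comm]
      calc δ ≤ |σ j * (z (Sum.inl j) - z (Sum.inr j))| := this.trans (le_abs_self _)
        _ = _ := by rw [abs_mul, hσ, one_mul])
    H hHi.integrableOn
  have hEm : ∀ X : Fin n ⊕ Fin n → ℝ, ∫ z in Ω, Complex.exp (2 * (Real.pi : ℂ) * Complex.I *
      ((∑ i, X i * Phi lam z i : ℝ) : ℂ)) * H z = EE lam f (fun i => X (Sum.inl i)) (fun i => X (Sum.inr i)) *
        EE lam g (fun i => X (Sum.inl i)) (fun i => X (Sum.inr i)) := by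
    intro X
    rw [setIntegral_eq_integral_of_forall_compl_eq_zero (fun z hz => by rw [hH0 z hz, mul_zero]),
      ← hmp.integral_comp hme, EE, EE, Measure.volume_eq_prod, ← integral_prod_mul]
    refine integral_congr_ae (Filter.Eventually.of_forall fun p => ?_)
    obtain ⟨ξ, η⟩ := p
    have e : ((MeasurableEquiv.sumPiEquivProdPi fun _ : Fin n ⊕ Fin n => ℝ).symm (ξ, η)) = Sum.elim ξ η := by
      ext (i | i) <;> rfl
    simp only [e, hH, Sum.elim_inl, Sum.elim_inr]
    rw [mul_mul_mul_comm, ← Complex.exp_add]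
    congr 2
    rw [← mul_add, ← Complex.ofReal_add]
    congr 2
    simp only [Fintype.sum_sum_type, Phi, phs, Sum.elim_inl, Sum.elim_inr, mul_add, Finset.sum_add_distrib]
    ring
  simp_rw [hEm] at h
  rw [lintegral_sum_pi] at h
  · simp only [Sum.elim_inl, Sum.elim_inr, enorm_mul] at h
    refine h.trans ?_
    gcongr
    calc ∫⁻ z in Ω, ‖H z‖ₑ ^ (2 : ℝ) ≤ ∫⁻ z, ‖H z‖ₑ ^ (2 : ℝ) := setLIntegral_le_lintegral _ _
      _ = _ := by
        rw [← hmp.lintegral_comp_emb hme, Measure.volume_eq_prod, ← lintegral_prod_mul]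
        · refine lintegral_congr fun p => ?_
          rw [← ENNReal.mul_rpow_of_nonneg _ _ (by norm_num), ← enorm_mul]
          rfl
        · exact (hf.enorm.pow_const _).aemeasurable
        · exact (hg.enorm.pow_const _).aemeasurable
  · have a : Measurable (fun X : Fin n ⊕ Fin n → ℝ => ((fun i => X (Sum.inl i), fun i => X (Sum.inr i)) : (Fin n → ℝ) × (Fin n → ℝ))) := by
      fun_prop
    exact (((measurable_EE lam f hf).comp a).mul ((measurable_EE lam g hg).comp a)).enorm.pow_const _


/-- diagonal affine map -/
def aff {n : ℕ} (d t : Fin n → ℝ) (ξ : Fin n → ℝ) : Fin n → ℝ := fun i => d i * ξ i + t i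

theorem measurable_aff {n : ℕ} (d t : Fin n → ℝ) : Measurable (aff d t) := by
  unfold aff; fun_prop

theorem aff_map {n : ℕ} (d t : Fin n → ℝ) (hd : ∀ i, 0 < d i) :
    Measure.map (aff d t) volume = ENNReal.ofReal (∏ i, d i)⁻¹ • volume := by
  have hpos : 0 < ∏ i, d i := Finset.prod_pos fun i _ => hd i
  have h1 : Measure.map (fun ξ : Fin n → ℝ => fun i => d i * ξ i) volume = ENNReal.ofReal (∏ i, d i)⁻¹ • volume := by
    have h := Real.smul_map_diagonal_volume_pi (D := d) (by rw [Matrix.det_diagonal]; exact hpos.ne')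
    rw [Matrix.det_diagonal, abs_of_pos hpos] at h
    have e : (Matrix.toLin' (Matrix.diagonal d) : (Fin n → ℝ) → (Fin n → ℝ)) = fun ξ i => d i * ξ i := by
      ext ξ i
      simp [Matrix.mulVec_diagonal]
    rw [e] at h
    have h' := congrArg (fun μ => ENNReal.ofReal (∏ i, d i)⁻¹ • μ) h
    simp only [smul_smul] at h'
    rw [← ENNReal.ofReal_mul (by positivity), inv_mul_cancel₀ hpos.ne', ENNReal.ofReal_one, one_smul] at h'
    exact h'
  have e : aff d t = (fun v => v + t) ∘ (fun ξ : Fin n → ℝ => fun i => d i * ξ i) := by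
    ext ξ i; rfl
  rw [e, ← Measure.map_map (by fun_prop) (by fun_prop), h1, Measure.map_smul, map_add_right_eq_self]

theorem lintegral_aff {n : ℕ} (d t : Fin n → ℝ) (hd : ∀ i, 0 < d i)
    (G : (Fin n → ℝ) → ℝ≥0∞) (hG : Measurable G) :
    ∫⁻ ξ, G (aff d t ξ) = ENNReal.ofReal (∏ i, d i)⁻¹ * ∫⁻ ξ, G ξ := by
  rw [← lintegral_map hG (measurable_aff d t), aff_map d t hd, lintegral_smul_measure, smul_eq_mul]

theorem integral_aff {n : ℕ} (d t : Fin n → ℝ) (hd : ∀ i, 0 < d i)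
    (G : (Fin n → ℝ) → ℂ) (hG : Measurable G) :
    ∫ ξ, G (aff d t ξ) = ((∏ i, d i)⁻¹ : ℝ) • ∫ ξ, G ξ := by
  have hpos : 0 < ∏ i, d i := Finset.prod_pos fun i _ => hd i
  rw [← integral_map (measurable_aff d t).aemeasurable hG.aestronglyMeasurable, aff_map d t hd,
    integral_smul_measure, ENNReal.toReal_ofReal (by positivity)]

/-- the shear coming from an affine change of variables -/
noncomputable def shear {n : ℕ} (lam : Fin n → Fin n) (d t y : Fin n → ℝ) : Fin n → ℝ :=
  fun i => (∑ j, if lam j = i then y j * d i * t j else 0) + y i * t (lam i) * d i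

theorem phs_aff {n : ℕ} (lam : Fin n → Fin n) (d t x y ξ : Fin n → ℝ) :
    phs lam x y (aff d t ξ) =
      phs lam (aff d (shear lam d t y) x) (aff (fun i => d i * d (lam i)) 0 y) ξ + phs lam x y t := by
  have h : ∑ i, (∑ j, if lam j = i then y j * d i * t j else 0) * ξ i =
      ∑ j, y j * d (lam j) * t j * ξ (lam j) := by
    simp_rw [Finset.sum_mul]
    rw [Finset.sum_comm]
    refine Finset.sum_congr rfl fun j _ => ?_
    simp [ite_mul]
  simp only [phs, aff, shear, add_mul, Finset.sum_add_distrib, h, Pi.zero_apply]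
  simp only [← Finset.sum_add_distrib]
  refine Finset.sum_congr rfl fun i _ => ?_
  ring

theorem EE_aff {n : ℕ} (lam : Fin n → Fin n) (d t : Fin n → ℝ) (hd : ∀ i, 0 < d i)
    (f : (Fin n → ℝ) → ℂ) (hf : Measurable f) (x y : Fin n → ℝ) :
    ‖EE lam f x y‖ₑ = ENNReal.ofReal (∏ i, d i) *
      ‖EE lam (fun ξ => f (aff d t ξ)) (aff d (shear lam d t y) x)
        (aff (fun i => d i * d (lam i)) 0 y)‖ₑ := by
  have hpos : 0 < ∏ i, d i := Finset.prod_pos fun i _ => hd i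
  have hm : Measurable (fun ξ => Complex.exp (2 * (Real.pi : ℂ) * Complex.I * ((phs lam x y ξ : ℝ) : ℂ)) * f ξ) := by
    refine Measurable.mul ?_ hf
    have : Continuous (fun ξ : (Fin n → ℝ) => phs lam x y ξ) :=
      (continuous_phs lam).comp (by fun_prop : Continuous fun ξ : (Fin n → ℝ) => ((x, y), ξ))
    have h2 : Continuous (fun ξ => Complex.exp (2 * (Real.pi : ℂ) * Complex.I * ((phs lam x y ξ : ℝ) : ℂ))) := by fun_prop
    exact h2.measurable
  have h := integral_aff d t hd _ hm
  have e : ∫ ξ, Complex.exp (2 * (Real.pi : ℂ) * Complex.I * ((phs lam x y (aff d t ξ) : ℝ) : ℂ)) * f (aff d t ξ)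
      = Complex.exp (2 * (Real.pi : ℂ) * Complex.I * ((phs lam x y t : ℝ) : ℂ)) *
        EE lam (fun ξ => f (aff d t ξ)) (aff d (shear lam d t y) x)
        (aff (fun i => d i * d (lam i)) 0 y) := by
    rw [EE, ← integral_const_mul]
    congr 1
    ext ξ
    rw [phs_aff, ← mul_assoc, ← Complex.exp_add]
    congr 2
    push_cast
    ring
  rw [e] at h
  have h2 := congrArg (fun z => ‖z‖ₑ) h
  rw [enorm_mul, ← ofReal_norm (Complex.exp _), norm_aux_exp, ENNReal.ofReal_one, one_mul, enorm_smul,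
    Real.enorm_eq_ofReal (by positivity)] at h2
  rw [h2, ← mul_assoc, ← ENNReal.ofReal_mul hpos.le, mul_inv_cancel₀ hpos.ne', ENNReal.ofReal_one, one_mul]
  rfl

/-- the box of half-side `R` -/
def Bx (n : ℕ) (R : ℝ) : Set (Fin n → ℝ) := {y | ∀ i, |y i| ≤ R}

/-- the half-open unit cube -/
def UU (n : ℕ) : Set (Fin n → ℝ) := {ξ | ∀ i, 0 ≤ ξ i ∧ ξ i < 1}

theorem measurableSet_Bx (n : ℕ) (R : ℝ) : MeasurableSet (Bx n R) := by
  rw [Bx, Set.ofPred_forall]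
  exact MeasurableSet.iInter fun j => measurableSet_le (by fun_prop) measurable_const

theorem measurableSet_UU (n : ℕ) : MeasurableSet (UU n) := by
  rw [UU, Set.ofPred_forall]
  refine MeasurableSet.iInter fun j => MeasurableSet.inter ?_ ?_
  · exact measurableSet_le measurable_const (measurable_pi_apply j)
  · exact measurableSet_lt (measurable_pi_apply j) measurable_const

/-- truncated left side -/
noncomputable def NN {n : ℕ} (lam : Fin n → Fin n) (s R : ℝ) (f : (Fin n → ℝ) → ℂ) : ℝ≥0∞ :=
  ∫⁻ y in Bx n R, ∫⁻ x, ‖EE lam f x y‖ₑ ^ s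

/-- right side -/
noncomputable def SS {n : ℕ} (s : ℝ) (f : (Fin n → ℝ) → ℂ) : ℝ≥0∞ := ∫⁻ ξ, ‖f ξ‖ₑ ^ s

/-- the truncated inequality -/
def Bd {n : ℕ} (lam : Fin n → Fin n) (s R : ℝ) (A : ℝ≥0∞) : Prop :=
  ∀ f : (Fin n → ℝ) → ℂ, Measurable f → Function.support f ⊆ UU n → SS s f ≠ ⊤ →
    NN lam s R f ≤ A * SS s f

theorem measurable_inner {n : ℕ} (lam : Fin n → Fin n) (s : ℝ) (f : (Fin n → ℝ) → ℂ) (hf : Measurable f) :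
    Measurable (fun y => ∫⁻ x, ‖EE lam f x y‖ₑ ^ s) := by
  have : Measurable (fun p : (Fin n → ℝ) × (Fin n → ℝ) => ‖EE lam f p.1 p.2‖ₑ ^ s) :=
    (measurable_EE lam f hf).enorm.pow_const _
  exact this.lintegral_prod_left'

theorem measurable_inner' {n : ℕ} (lam : Fin n → Fin n) (s : ℝ) (f : (Fin n → ℝ) → ℂ) (hf : Measurable f)
    (y : Fin n → ℝ) : Measurable (fun x => ‖EE lam f x y‖ₑ ^ s) := by
  have h : Measurable fun x => EE lam f x y :=
    Measurable.of_uncurry_right (f := fun x y => EE lam f x y) (measurable_EE lam f hf)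
  exact h.enorm.pow_const _

theorem NN_aff {n : ℕ} (lam : Fin n → Fin n) (s R : ℝ) (hs : 0 ≤ s)
    (d t : Fin n → ℝ) (hd : ∀ i, 0 < d i) (hd1 : ∀ i, d i ≤ 1)
    (f : (Fin n → ℝ) → ℂ) (hf : Measurable f) :
    NN lam s R f ≤ ENNReal.ofReal ((∏ i, d i) ^ s * (∏ i, d i)⁻¹ * (∏ i, d i * d (lam i))⁻¹) *
      NN lam s R (fun ξ => f (aff d t ξ)) := by
  have hpos : 0 < ∏ i, d i := Finset.prod_pos fun i _ => hd i
  have hpos2 : 0 < ∏ i, d i * d (lam i) := Finset.prod_pos fun i _ => mul_pos (hd i) (hd _)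
  set g := fun ξ => f (aff d t ξ) with hg
  have hgm : Measurable g := hf.comp (measurable_aff d t)
  set e := fun i => d i * d (lam i) with he
  have he0 : ∀ i, 0 < e i := fun i => mul_pos (hd i) (hd _)
  have h1 : ∀ y, ∫⁻ x, ‖EE lam f x y‖ₑ ^ s = ENNReal.ofReal ((∏ i, d i) ^ s * (∏ i, d i)⁻¹) *
      ∫⁻ x, ‖EE lam g x (aff e 0 y)‖ₑ ^ s := by
    intro y
    simp_rw [EE_aff lam d t hd f hf, ENNReal.mul_rpow_of_nonneg _ _ hs]
    rw [lintegral_const_mul' _ _ (ENNReal.rpow_ne_top_of_nonneg hs ENNReal.ofReal_ne_top),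
      lintegral_aff d (shear lam d t y) hd (fun x => ‖EE lam g x (aff e 0 y)‖ₑ ^ s)
        (measurable_inner' lam s g hgm _), ← mul_assoc,
      ENNReal.ofReal_rpow_of_nonneg hpos.le hs, ← ENNReal.ofReal_mul (by positivity)]
  rw [NN, NN, ENNReal.ofReal_mul (by positivity), mul_assoc]
  simp_rw [h1]
  rw [lintegral_const_mul' _ _ ENNReal.ofReal_ne_top]
  gcongr
  rw [← lintegral_indicator (measurableSet_Bx n R), ← lintegral_indicator (measurableSet_Bx n R),
    ← lintegral_aff e 0 he0 _ ((measurable_inner lam s g hgm).indicator (measurableSet_Bx n R))]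
  refine lintegral_mono fun y => ?_
  by_cases hy : y ∈ Bx n R
  · have hy' : aff e 0 y ∈ Bx n R := by
      intro i
      simp only [aff, Pi.zero_apply, add_zero, abs_mul, abs_of_pos (he0 i)]
      have : e i ≤ 1 := mul_le_one₀ (hd1 i) (hd _).le (hd1 _)
      calc e i * |y i| ≤ 1 * |y i| := by gcongr
        _ ≤ R := by rw [one_mul]; exact hy i
    rw [Set.indicator_of_mem hy, Set.indicator_of_mem hy']
  · rw [Set.indicator_of_notMem hy]; exact zero_le

theorem rescale {n : ℕ} (lam : Fin n → Fin n) (s R : ℝ) (hs : 0 ≤ s) (W : ℕ)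
    (A : ℝ≥0∞) (hA : Bd lam s R A)
    (j : Fin n) (hW : (Finset.univ.filter (fun i => lam i = j)).card ≤ W)
    (K : ℕ) (hK : 1 ≤ K) (b : ℕ)
    (f : (Fin n → ℝ) → ℂ) (hf : Measurable f)
    (hsupp : ∀ ξ, f ξ ≠ 0 → ξ ∈ UU n ∧ (b : ℝ) ≤ K * ξ j ∧ K * ξ j < b + 1)
    (hfin : SS s f ≠ ⊤) :
    NN lam s R f ≤ ENNReal.ofReal ((K : ℝ) ^ (-(s - 3 - W))) * A * SS s f := by
  have hK0 : (0 : ℝ) < K := by exact_mod_cast hK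
  have hK1 : (1 : ℝ) ≤ K := by exact_mod_cast hK
  set d : Fin n → ℝ := fun i => if i = j then (K : ℝ)⁻¹ else 1 with hd
  set t : Fin n → ℝ := fun i => if i = j then b * (K : ℝ)⁻¹ else 0 with ht
  have hd0 : ∀ i, 0 < d i := by
    intro i; simp only [hd]; split_ifs <;> positivity
  have hd1 : ∀ i, d i ≤ 1 := by
    intro i; simp only [hd]; split_ifs
    · exact inv_le_one_of_one_le₀ hK1
    · exact le_rfl
  have hprod : ∏ i, d i = (K : ℝ)⁻¹ := by
    simp [hd]
  have hprod2 : ∏ i, d i * d (lam i) = (K : ℝ)⁻¹ * ((K : ℝ)⁻¹) ^ (Finset.univ.filter (fun i => lam i = j)).card := by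
    rw [Finset.prod_mul_distrib, hprod]
    congr 1
    simp only [hd]
    rw [Finset.prod_ite]
    simp
  have hg := hA (fun ξ => f (aff d t ξ)) (hf.comp (measurable_aff d t)) (by
    intro ξ hξ
    obtain ⟨h1, h2, h3⟩ := hsupp _ hξ
    intro i
    by_cases hi : i = j
    · subst hi
      have e : (K : ℝ) * aff d t ξ i = ξ i + b := by
        simp only [aff, hd, ht, if_true]
        field_simp
      rw [e] at h2 h3
      constructor <;> linarith
    · have := h1 i
      simpa [aff, hd, ht, hi] using this)
  have hSS : SS s (fun ξ => f (aff d t ξ)) = ENNReal.ofReal (∏ i, d i)⁻¹ * SS s f :=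
    lintegral_aff d t hd0 (fun ξ => ‖f ξ‖ₑ ^ s) (hf.enorm.pow_const _)
  have hg' := hg (by rw [hSS]; exact ENNReal.mul_ne_top ENNReal.ofReal_ne_top hfin)
  refine (NN_aff lam s R hs d t hd0 hd1 f hf).trans ?_
  calc _ ≤ ENNReal.ofReal ((∏ i, d i) ^ s * (∏ i, d i)⁻¹ * (∏ i, d i * d (lam i))⁻¹) *
        (A * (ENNReal.ofReal (∏ i, d i)⁻¹ * SS s f)) := by
        rw [← hSS]; gcongr
    _ = ENNReal.ofReal ((∏ i, d i) ^ s * (∏ i, d i)⁻¹ * (∏ i, d i * d (lam i))⁻¹ * (∏ i, d i)⁻¹) * A * SS s f := by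
        have hpos : 0 < ∏ i, d i := Finset.prod_pos fun i _ => hd0 i
        have hpos2 : 0 < ∏ i, d i * d (lam i) := Finset.prod_pos fun i _ => mul_pos (hd0 i) (hd0 _)
        rw [ENNReal.ofReal_mul (q := (∏ i, d i)⁻¹) (by positivity)]
        ring
    _ ≤ _ := by
        gcongr ENNReal.ofReal ?_ * A * SS s f
        rw [hprod, hprod2]
        have e : ((K : ℝ)⁻¹) ^ s * (K : ℝ)⁻¹⁻¹ * ((K : ℝ)⁻¹ * (K : ℝ)⁻¹ ^ (Finset.univ.filter (fun i => lam i = j)).card)⁻¹ * (K : ℝ)⁻¹⁻¹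
          = (K : ℝ) ^ (-s + 3 + (Finset.univ.filter (fun i => lam i = j)).card) := by
          rw [Real.rpow_add hK0, Real.rpow_add hK0, Real.rpow_natCast, Real.inv_rpow hK0.le, Real.rpow_neg hK0.le]
          have : (K : ℝ) ^ (3 : ℝ) = (K : ℝ) ^ 3 := by
            rw [← Real.rpow_natCast]; norm_num
          rw [this]
          simp only [mul_inv, inv_pow, inv_inv]
          ring
        rw [e]
        apply Real.rpow_le_rpow_of_exponent_le hK1
        have : ((Finset.univ.filter (fun i => lam i = j)).card : ℝ) ≤ W := by exact_mod_cast hW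
        linarith


/-- adjacency of cells -/
def near {K : ℕ} (p q : Fin K) : Prop := (p : ℕ) ≤ q + 1 ∧ (q : ℕ) ≤ p + 1

instance {K : ℕ} (p q : Fin K) : Decidable (near p q) := by unfold near; infer_instance

theorem card_near {K : ℕ} (q : Fin K) : (Finset.univ.filter (fun p => near p q)).card ≤ 3 := by
  have : (Finset.univ.filter (fun p => near p q)).card ≤ (Finset.Icc ((q : ℕ) - 1) (q + 1)).card := by
    refine Finset.card_le_card_of_injOn (fun p : Fin K => (p : ℕ)) ?_ ?_
    · intro p hp
      simp only [Finset.coe_filter, Finset.mem_univ, true_and] at hp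
      have h1 := hp.1
      have h2 := hp.2
      simp only [Finset.coe_Icc, Set.mem_Icc]
      omega
    · intro p _ p' _ h
      exact Fin.ext h
  refine this.trans ?_
  rw [Nat.card_Icc]; omega

theorem near_part {n K : ℕ} (a : (Fin n → Fin K) → ℂ) (P : Fin n → Fin K) (J : Finset (Fin n))
    (s : ℝ) (hs : 1 ≤ s) :
    ‖∑ c, (∏ j ∈ J, if near (c j) (P j) then (1 : ℂ) else 0) * a c‖ₑ ^ s ≤
      ((3 : ℝ≥0∞) ^ n) ^ (s - 1) * ∑ b : J → Fin K,
        ‖∑ c ∈ Finset.univ.filter (fun c : Fin n → Fin K => (fun j : J => c j) = b), a c‖ₑ ^ s := by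
  classical
  set T : Finset (J → Fin K) := Fintype.piFinset (fun j : J => Finset.univ.filter (fun p => near p (P j))) with hT
  have hcard : (T.card : ℝ≥0∞) ≤ (3 : ℝ≥0∞) ^ n := by
    have h1 : T.card ≤ 3 ^ n := by
      rw [hT, Fintype.card_piFinset]
      calc ∏ j : J, (Finset.univ.filter (fun p => near p (P j))).card ≤ ∏ _j : J, 3 :=
            Finset.prod_le_prod' fun j _ => card_near _
        _ = 3 ^ J.card := by simp
        _ ≤ 3 ^ n := Nat.pow_le_pow_right (by norm_num) (by simpa using Finset.card_le_univ J)
    exact_mod_cast h1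
  have h1 : ∑ c, (∏ j ∈ J, if near (c j) (P j) then (1 : ℂ) else 0) * a c =
      ∑ b ∈ T, ∑ c ∈ Finset.univ.filter (fun c : Fin n → Fin K => (fun j : J => c j) = b), a c := by
    have h2 : ∀ c : Fin n → Fin K, (∏ j ∈ J, if near (c j) (P j) then (1 : ℂ) else 0) * a c =
        if (fun j : J => c j) ∈ T then a c else 0 := by
      intro c
      by_cases h : (fun j : J => c j) ∈ T
      · rw [if_pos h]
        simp only [hT, Fintype.mem_piFinset, Finset.mem_filter, Finset.mem_univ, true_and] at h
        rw [Finset.prod_eq_one, one_mul]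
        intro j hj
        rw [if_pos (h ⟨j, hj⟩)]
      · rw [if_neg h]
        simp only [hT, Fintype.mem_piFinset, Finset.mem_filter, Finset.mem_univ, true_and, not_forall] at h
        obtain ⟨j, hj⟩ := h
        rw [Finset.prod_eq_zero j.2, zero_mul]
        rw [if_neg hj]
    simp_rw [h2]
    rw [← Finset.sum_filter]
    rw [← Finset.sum_fiberwise_of_maps_to (s := Finset.univ.filter (fun c : Fin n → Fin K => (fun j : J => c j) ∈ T))
      (t := T) (g := fun c : Fin n → Fin K => (fun j : J => c j)) (by
        intro c hc; simpa using hc)]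
    refine Finset.sum_congr rfl fun b hb => Finset.sum_congr ?_ fun _ _ => rfl
    ext c
    simp only [Finset.mem_filter, Finset.mem_univ, true_and]
    constructor
    · exact fun h => h.2
    · intro h; exact ⟨h ▸ hb, h⟩
  rw [h1]
  calc _ ≤ (∑ b ∈ T, ‖∑ c ∈ Finset.univ.filter (fun c : Fin n → Fin K => (fun j : J => c j) = b), a c‖ₑ) ^ s := by
        gcongr
        exact enorm_sum_le _ _
    _ ≤ (T.card : ℝ≥0∞) ^ (s - 1) * ∑ b ∈ T, ‖∑ c ∈ Finset.univ.filter (fun c : Fin n → Fin K => (fun j : J => c j) = b), a c‖ₑ ^ s :=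
        ENNReal.rpow_sum_le_const_mul_sum_rpow _ _ hs
    _ ≤ _ := by
        gcongr
        exact Finset.subset_univ _

theorem broad_narrow {n K : ℕ} (hK : 1 ≤ K) (a : (Fin n → Fin K) → ℂ) (s : ℝ) (hs : 1 ≤ s) :
    ‖∑ c, a c‖ₑ ^ s ≤
      ((2 : ℝ≥0∞) ^ (s - 1) * ((2 : ℝ≥0∞) ^ n) ^ (s - 1) * ((3 : ℝ≥0∞) ^ n) ^ (s - 1)) *
        ∑ J ∈ Finset.univ.filter (fun J : Finset (Fin n) => J.Nonempty), ∑ b : J → Fin K,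
        ‖∑ c ∈ Finset.univ.filter (fun c : Fin n → Fin K => (fun j : J => c j) = b), a c‖ₑ ^ s +
      ((2 : ℝ≥0∞) ^ (s - 1) * ((K : ℝ≥0∞) ^ n) ^ (s - 1)) *
        ∑ p ∈ Finset.univ.filter (fun p : (Fin n → Fin K) × (Fin n → Fin K) => ∀ j, ¬ near (p.1 j) (p.2 j)),
          (‖a p.1‖ₑ * ‖a p.2‖ₑ) ^ (s / 2) := by
  classical
  have hne : Nonempty (Fin K) := ⟨⟨0, hK⟩⟩
  obtain ⟨P, hP⟩ := Finite.exists_max (fun c => ‖a c‖ₑ)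
  set S : (Fin n → Fin K) → Fin n → ℂ := fun c j => if near (c j) (P j) then (1 : ℂ) else 0 with hS
  set N := Finset.univ.filter (fun J : Finset (Fin n) => J.Nonempty) with hN
  set T := Finset.univ.filter (fun c : Fin n → Fin K => ∀ j, ¬ near (c j) (P j)) with hT
  have hid : ∀ c, ∏ j, (1 + (- S c j)) = 1 + ∑ J ∈ N, ∏ j ∈ J, (- S c j) := by
    intro c
    rw [Finset.prod_one_add, Finset.powerset_univ,
      ← Finset.sum_filter_add_sum_filter_not Finset.univ (fun J : Finset (Fin n) => J.Nonempty), add_comm]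
    congr 1
    have : (Finset.univ.filter (fun J : Finset (Fin n) => ¬ J.Nonempty)) = {∅} := by
      ext J; simp
    rw [this]; simp
  have hprod : ∀ c, (∏ j, (1 + (- S c j))) * a c = if (∀ j, ¬ near (c j) (P j)) then a c else 0 := by
    intro c
    by_cases h : ∀ j, ¬ near (c j) (P j)
    · rw [if_pos h, Finset.prod_eq_one, one_mul]
      intro j _
      simp [hS, h j]
    · rw [if_neg h]
      push Not at h
      obtain ⟨j, hj⟩ := h
      rw [Finset.prod_eq_zero (Finset.mem_univ j), zero_mul]
      simp [hS, hj]
  have hsum : ∑ c, a c = ∑ c ∈ T, a c - ∑ J ∈ N, ∑ c, (∏ j ∈ J, (- S c j)) * a c := by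
    rw [Finset.sum_comm, hT, Finset.sum_filter, ← Finset.sum_sub_distrib]
    refine Finset.sum_congr rfl fun c _ => ?_
    rw [← hprod c, hid c, ← Finset.sum_mul]
    ring
  have hneg : ∀ J : Finset (Fin n), ‖∑ c, (∏ j ∈ J, (- S c j)) * a c‖ₑ = ‖∑ c, (∏ j ∈ J, S c j) * a c‖ₑ := by
    intro J
    simp_rw [Finset.prod_neg, mul_assoc]
    rw [← Finset.mul_sum, enorm_mul]
    simp
  have h1 : ‖∑ c, a c‖ₑ ≤ ∑ c ∈ T, ‖a c‖ₑ + ∑ J ∈ N, ‖∑ c, (∏ j ∈ J, S c j) * a c‖ₑ := by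
    rw [hsum]
    refine (enorm_sub_le).trans ?_
    gcongr
    · exact enorm_sum_le _ _
    · refine (enorm_sum_le _ _).trans ?_
      exact Finset.sum_le_sum fun J _ => (hneg J).le
  have h2 : (∑ J ∈ N, ‖∑ c, (∏ j ∈ J, S c j) * a c‖ₑ) ^ s ≤ ((2 : ℝ≥0∞) ^ n) ^ (s - 1) *
      ∑ J ∈ N, ((3 : ℝ≥0∞) ^ n) ^ (s - 1) * ∑ b : J → Fin K,
        ‖∑ c ∈ Finset.univ.filter (fun c : Fin n → Fin K => (fun j : J => c j) = b), a c‖ₑ ^ s := by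
    refine (ENNReal.rpow_sum_le_const_mul_sum_rpow _ _ hs).trans ?_
    gcongr with J hJ
    · have : N.card ≤ 2 ^ n := by
        refine (Finset.card_le_univ _).trans ?_
        simp
      exact_mod_cast this
    · exact near_part a P J s hs
  have h3 : (∑ c ∈ T, ‖a c‖ₑ) ^ s ≤ ((K : ℝ≥0∞) ^ n) ^ (s - 1) *
      ∑ p ∈ Finset.univ.filter (fun p : (Fin n → Fin K) × (Fin n → Fin K) => ∀ j, ¬ near (p.1 j) (p.2 j)),
          (‖a p.1‖ₑ * ‖a p.2‖ₑ) ^ (s / 2) := by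
    refine (ENNReal.rpow_sum_le_const_mul_sum_rpow _ _ hs).trans ?_
    gcongr ?_ ^ (s - 1) * ?_
    · have : T.card ≤ K ^ n := by
        refine (Finset.card_le_univ _).trans ?_
        simp
      exact_mod_cast this
    · calc ∑ c ∈ T, ‖a c‖ₑ ^ s ≤ ∑ c ∈ T, (‖a c‖ₑ * ‖a P‖ₑ) ^ (s / 2) := by
            refine Finset.sum_le_sum fun c _ => ?_
            calc ‖a c‖ₑ ^ s = (‖a c‖ₑ * ‖a c‖ₑ) ^ (s / 2) := by
                  rw [← sq, ← ENNReal.rpow_natCast, ← ENNReal.rpow_mul]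
                  congr 1
                  push_cast; ring
              _ ≤ _ := by
                  gcongr
                  exact hP c
        _ = ∑ p ∈ T.image (fun c => (c, P)), (‖a p.1‖ₑ * ‖a p.2‖ₑ) ^ (s / 2) := by
            rw [Finset.sum_image]
            intro c _ c' _ h
            exact (Prod.ext_iff.1 h).1
        _ ≤ _ := by
            refine Finset.sum_le_sum_of_subset ?_
            intro p hp
            obtain ⟨c, hc, rfl⟩ := Finset.mem_image.1 hp
            simpa [hT] using hc
  calc ‖∑ c, a c‖ₑ ^ s ≤ (∑ c ∈ T, ‖a c‖ₑ + ∑ J ∈ N, ‖∑ c, (∏ j ∈ J, S c j) * a c‖ₑ) ^ s := by gcongr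
    _ ≤ (2 : ℝ≥0∞) ^ (s - 1) * ((∑ c ∈ T, ‖a c‖ₑ) ^ s + (∑ J ∈ N, ‖∑ c, (∏ j ∈ J, S c j) * a c‖ₑ) ^ s) :=
        ENNReal.rpow_add_le_mul_rpow_add_rpow _ _ hs
    _ ≤ _ := mul_le_mul_right (add_le_add h3 h2) _
    _ = _ := by
        rw [← Finset.mul_sum]
        ring


theorem volume_UU (n : ℕ) : volume (UU n) = 1 := by
  have : UU n = Set.univ.pi (fun _ : Fin n => Set.Ico (0 : ℝ) 1) := by
    ext ξ; simp [UU]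
  rw [this, volume_pi_pi]
  simp

theorem SS_restrict {n : ℕ} (t : ℝ) (ht : 0 < t) (f : (Fin n → ℝ) → ℂ) (hsupp : Function.support f ⊆ UU n) :
    SS t f = ∫⁻ ξ in UU n, ‖f ξ‖ₑ ^ t := by
  rw [SS, ← lintegral_indicator (measurableSet_UU n)]
  refine lintegral_congr fun ξ => ?_
  by_cases h : ξ ∈ UU n
  · rw [Set.indicator_of_mem h]
  · rw [Set.indicator_of_notMem h]
    have : f ξ = 0 := by
      by_contra h'
      exact h (hsupp h')
    rw [this, enorm_zero, ENNReal.zero_rpow_of_pos ht]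

theorem SS_mono {n : ℕ} (t s : ℝ) (ht : 0 < t) (hts : t ≤ s) (f : (Fin n → ℝ) → ℂ) (hf : Measurable f)
    (hsupp : Function.support f ⊆ UU n) : SS t f ≤ SS s f ^ (t / s) := by
  have hpr : IsProbabilityMeasure (volume.restrict (UU n)) := ⟨by simp [volume_UU]⟩
  have h := eLpNorm'_le_eLpNorm'_of_exponent_le (μ := volume.restrict (UU n)) ht hts hf.aestronglyMeasurable
  rw [eLpNorm'_eq_lintegral_enorm, eLpNorm'_eq_lintegral_enorm, ← SS_restrict t ht f hsupp,
    ← SS_restrict s (ht.trans_le hts) f hsupp] at h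
  have h2 := ENNReal.rpow_le_rpow h ht.le
  rw [← ENNReal.rpow_mul, ← ENNReal.rpow_mul, one_div_mul_cancel ht.ne', ENNReal.rpow_one] at h2
  rwa [one_div_mul_eq_div] at h2

theorem SS_one {n : ℕ} (f : (Fin n → ℝ) → ℂ) : SS 1 f = ∫⁻ ξ, ‖f ξ‖ₑ := by
  simp [SS]

theorem integrable_of_SS {n : ℕ} (s : ℝ) (hs : 1 ≤ s) (f : (Fin n → ℝ) → ℂ) (hf : Measurable f)
    (hsupp : Function.support f ⊆ UU n) (hfin : SS s f ≠ ⊤) : Integrable f := by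
  refine ⟨hf.aestronglyMeasurable, ?_⟩
  rw [HasFiniteIntegral, ← SS_one]
  refine (SS_mono 1 s one_pos hs f hf hsupp).trans_lt ?_
  exact ENNReal.rpow_lt_top_of_nonneg (by positivity) hfin

theorem apriori {n : ℕ} (lam : Fin n → Fin n) (s R : ℝ) (hs : 2 ≤ s) :
    Bd lam s R (volume (Bx n R)) := by
  intro f hf hsupp hfin
  have hs0 : 0 < s := by linarith
  have hi := integrable_of_SS s (by linarith) f hf hsupp hfin
  have key : ∀ y, ∫⁻ x, ‖EE lam f x y‖ₑ ^ s ≤ SS s f := by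
    intro y
    calc ∫⁻ x, ‖EE lam f x y‖ₑ ^ s ≤ ∫⁻ x, SS 1 f ^ (s - 2) * ‖EE lam f x y‖ₑ ^ (2 : ℝ) := by
          refine lintegral_mono fun x => ?_
          have : ‖EE lam f x y‖ₑ ^ s = ‖EE lam f x y‖ₑ ^ (s - 2) * ‖EE lam f x y‖ₑ ^ (2 : ℝ) := by
            rw [← ENNReal.rpow_add_of_nonneg _ _ (by linarith) (by norm_num)]; congr 1; ring
          rw [this]
          gcongr
          rw [SS_one]
          exact enorm_EE_le lam f x y
      _ = SS 1 f ^ (s - 2) * ∫⁻ x, ‖EE lam f x y‖ₑ ^ (2 : ℝ) :=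
          lintegral_const_mul _ (measurable_inner' lam 2 f hf y)
      _ ≤ (SS s f ^ (1 / s)) ^ (s - 2) * (SS s f ^ (2 / s)) := by
          gcongr
          · exact SS_mono 1 s one_pos (by linarith) f hf hsupp
          · exact (EE_plancherel lam f hi y).trans (SS_mono 2 s two_pos hs f hf hsupp)
      _ = SS s f := by
          have h2 : 0 ≤ s - 2 := by linarith
          rw [← ENNReal.rpow_mul, ← ENNReal.rpow_add_of_nonneg _ _ (by positivity) (by positivity)]
          have : 1 / s * (s - 2) + 2 / s = 1 := by field_simp; ring
          rw [this, ENNReal.rpow_one]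
  calc NN lam s R f ≤ ∫⁻ y in Bx n R, SS s f := lintegral_mono fun y => key y
    _ = volume (Bx n R) * SS s f := by rw [setLIntegral_const, mul_comm]

theorem bil_s {n : ℕ} (lam : Fin n → Fin n) (hlam : ∀ j, (lam j : ℕ) ≤ (j : ℕ)) (s : ℝ) (hs : 4 ≤ s)
    (f g : (Fin n → ℝ) → ℂ) (hf : Measurable f) (hg : Measurable g)
    (hfs : Function.support f ⊆ UU n) (hgs : Function.support g ⊆ UU n)
    (S : ℝ≥0∞) (hS : S ≠ ⊤) (hfS : SS s f ≤ S) (hgS : SS s g ≤ S)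
    (σ : Fin n → ℝ) (hσ : ∀ j, |σ j| = 1) (δ : ℝ) (hδ : 0 < δ)
    (hsep : ∀ ξ η, f ξ ≠ 0 → g η ≠ 0 → ∀ j, δ ≤ σ j * (ξ j - η j)) :
    ∫⁻ y, ∫⁻ x, (‖EE lam f x y‖ₑ * ‖EE lam g x y‖ₑ) ^ (s / 2) ≤ ENNReal.ofReal (δ ^ n)⁻¹ * S := by
  have hs0 : 0 < s := by linarith
  have hfin := (hfS.trans_lt hS.lt_top).ne
  have hgin := (hgS.trans_lt hS.lt_top).ne
  have hfi := integrable_of_SS s (by linarith) f hf hfs hfin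
  have hgi := integrable_of_SS s (by linarith) g hg hgs hgin
  have hb := bilinear lam hlam f g hf hg hfi hgi σ hσ δ hδ hsep
  have hmono : ∀ t, 0 < t → t ≤ s → ∀ h : (Fin n → ℝ) → ℂ, Measurable h → Function.support h ⊆ UU n →
      SS s h ≤ S → SS t h ≤ S ^ (t / s) := by
    intro t ht hts h hh hhs hhS
    exact (SS_mono t s ht hts h hh hhs).trans (ENNReal.rpow_le_rpow hhS (by positivity))
  set c := (SS 1 f * SS 1 g) ^ (s / 2 - 2) with hc
  have e0 : 0 ≤ s / 2 - 2 := by linarith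
  have hc1 : c ≤ (S ^ (1 / s) * S ^ (1 / s)) ^ (s / 2 - 2) := by
    rw [hc]
    gcongr
    · exact hmono 1 one_pos (by linarith) f hf hfs hfS
    · exact hmono 1 one_pos (by linarith) g hg hgs hgS
  have hctop : c ≠ ⊤ := by
    refine (hc1.trans_lt ?_).ne
    have : S ^ (1 / s) < ⊤ := ENNReal.rpow_lt_top_of_nonneg (by positivity) hS
    exact ENNReal.rpow_lt_top_of_nonneg e0 (ENNReal.mul_lt_top this this).ne
  calc ∫⁻ y, ∫⁻ x, (‖EE lam f x y‖ₑ * ‖EE lam g x y‖ₑ) ^ (s / 2)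
      ≤ ∫⁻ y, ∫⁻ x, c * (‖EE lam f x y‖ₑ * ‖EE lam g x y‖ₑ) ^ (2 : ℝ) := by
        refine lintegral_mono fun y => lintegral_mono fun x => ?_
        have : (‖EE lam f x y‖ₑ * ‖EE lam g x y‖ₑ) ^ (s / 2) = (‖EE lam f x y‖ₑ * ‖EE lam g x y‖ₑ) ^ (s / 2 - 2) *
            (‖EE lam f x y‖ₑ * ‖EE lam g x y‖ₑ) ^ (2 : ℝ) := by
          rw [← ENNReal.rpow_add_of_nonneg _ _ e0 (by norm_num)]; congr 1; ring
        simp only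
        rw [this, hc]
        gcongr
        · rw [SS_one]; exact enorm_EE_le lam f x y
        · rw [SS_one]; exact enorm_EE_le lam g x y
    _ = c * ∫⁻ y, ∫⁻ x, (‖EE lam f x y‖ₑ * ‖EE lam g x y‖ₑ) ^ (2 : ℝ) := by
        rw [← lintegral_const_mul' _ _ hctop]
        refine lintegral_congr fun y => ?_
        rw [lintegral_const_mul' _ _ hctop]
    _ ≤ (S ^ (1 / s) * S ^ (1 / s)) ^ (s / 2 - 2) * (ENNReal.ofReal (δ ^ n)⁻¹ * (S ^ (2 / s) * S ^ (2 / s))) := by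
        gcongr
        refine hb.trans ?_
        gcongr
        · exact hmono 2 two_pos (by linarith) f hf hfs hfS
        · exact hmono 2 two_pos (by linarith) g hg hgs hgS
    _ = ENNReal.ofReal (δ ^ n)⁻¹ * S := by
        rw [mul_left_comm]
        congr 1
        rw [← ENNReal.rpow_add_of_nonneg _ _ (by positivity) (by positivity),
          ← ENNReal.rpow_add_of_nonneg _ _ (by positivity) (by positivity), ← ENNReal.rpow_mul,
          ← ENNReal.rpow_add_of_nonneg _ _ (by positivity) (by positivity)]
        have : (1 / s + 1 / s) * (s / 2 - 2) + (2 / s + 2 / s) = 1 := by field_simp; ring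
        rw [this, ENNReal.rpow_one]

/-- the cell containing a point -/
noncomputable def cell {n : ℕ} (k : ℕ) (ξ : Fin n → ℝ) : Fin n → Fin (k + 1) :=
  fun j => Fin.ofNat (k + 1) ⌊((k + 1 : ℕ) : ℝ) * ξ j⌋₊

theorem measurable_cell {n : ℕ} (k : ℕ) : Measurable (cell (n := n) k) := by
  refine measurable_pi_iff.2 fun j => ?_
  have h1 : Measurable (fun ξ : Fin n → ℝ => ⌊((k + 1 : ℕ) : ℝ) * ξ j⌋₊) :=
    Nat.measurable_floor.comp (by fun_prop)
  exact (measurable_from_top (f := fun m : ℕ => Fin.ofNat (k + 1) m)).comp h1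

theorem cell_spec {n : ℕ} (k : ℕ) (ξ : Fin n → ℝ) (hξ : ξ ∈ UU n) (j : Fin n) :
    ((cell k ξ j : ℕ) : ℝ) ≤ ((k + 1 : ℕ) : ℝ) * ξ j ∧ ((k + 1 : ℕ) : ℝ) * ξ j < (cell k ξ j : ℕ) + 1 := by
  have h := hξ j
  have hk : (0 : ℝ) < ((k + 1 : ℕ) : ℝ) := by positivity
  have hlt : ⌊((k + 1 : ℕ) : ℝ) * ξ j⌋₊ < k + 1 := by
    rw [Nat.floor_lt (mul_nonneg hk.le h.1)]
    nlinarith [h.2]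
  have : (cell k ξ j : ℕ) = ⌊((k + 1 : ℕ) : ℝ) * ξ j⌋₊ := by
    simp only [cell, Fin.val_ofNat]
    exact Nat.mod_eq_of_lt hlt
  rw [this]
  exact ⟨Nat.floor_le (mul_nonneg hk.le h.1), Nat.lt_floor_add_one _⟩

open Classical in
/-- restriction of a function to a set of cells -/
noncomputable def cutf {n k : ℕ} (T : Set (Fin n → Fin (k + 1))) (f : (Fin n → ℝ) → ℂ) : (Fin n → ℝ) → ℂ :=
  fun ξ => if cell k ξ ∈ T then f ξ else 0

theorem measurable_cutf {n k : ℕ} (T : Set (Fin n → Fin (k + 1))) (f : (Fin n → ℝ) → ℂ) (hf : Measurable f) :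
    Measurable (cutf T f) := by
  unfold cutf
  refine Measurable.ite ?_ hf measurable_const
  exact measurable_cell k (Set.toFinite T).measurableSet

theorem cutf_ne {n k : ℕ} (T : Set (Fin n → Fin (k + 1))) (f : (Fin n → ℝ) → ℂ) (ξ : Fin n → ℝ)
    (h : cutf T f ξ ≠ 0) : f ξ ≠ 0 ∧ cell k ξ ∈ T := by
  unfold cutf at h
  by_cases h' : cell k ξ ∈ T
  · rw [if_pos h'] at h; exact ⟨h, h'⟩
  · rw [if_neg h'] at h; exact absurd rfl h

theorem support_cutf {n k : ℕ} (T : Set (Fin n → Fin (k + 1))) (f : (Fin n → ℝ) → ℂ)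
    (hsupp : Function.support f ⊆ UU n) : Function.support (cutf T f) ⊆ UU n := 
  fun ξ h => hsupp (cutf_ne T f ξ h).1

theorem enorm_cutf_le {n k : ℕ} (T : Set (Fin n → Fin (k + 1))) (f : (Fin n → ℝ) → ℂ) (ξ : Fin n → ℝ) :
    ‖cutf T f ξ‖ₑ ≤ ‖f ξ‖ₑ := by
  unfold cutf
  split_ifs <;> simp

theorem SS_cutf_le {n k : ℕ} (s : ℝ) (hs : 0 ≤ s) (T : Set (Fin n → Fin (k + 1))) (f : (Fin n → ℝ) → ℂ) :
    SS s (cutf T f) ≤ SS s f :=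
  lintegral_mono fun ξ => ENNReal.rpow_le_rpow (enorm_cutf_le T f ξ) hs

theorem EE_cutf {n k : ℕ} (lam : Fin n → Fin n) (T : Finset (Fin n → Fin (k + 1))) (f : (Fin n → ℝ) → ℂ)
    (hf : Measurable f) (hi : Integrable f) (x y : Fin n → ℝ) :
    EE lam (cutf (T : Set (Fin n → Fin (k + 1))) f) x y = ∑ c ∈ T, EE lam (cutf {c} f) x y := by
  unfold EE
  rw [← integral_finsetSum]
  · refine integral_congr_ae (Filter.Eventually.of_forall fun ξ => ?_)
    simp only
    rw [← Finset.mul_sum]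
    congr 1
    simp [cutf]
  · intro c _
    refine integrable_EE lam _ ?_ x y
    refine hi.mono (measurable_cutf _ f hf).aestronglyMeasurable (Filter.Eventually.of_forall fun ξ => ?_)
    have := enorm_cutf_le {c} f ξ
    rwa [enorm_le_iff_norm_le] at this

theorem SS_cut_sum {n k : ℕ} (s : ℝ) (hs : 0 < s) (J : Finset (Fin n)) (f : (Fin n → ℝ) → ℂ) (hf : Measurable f) :
    ∑ b : J → Fin (k + 1), SS s (cutf {c : Fin n → Fin (k + 1) | (fun j : J => c j) = b} f) = SS s f := by
  classical
  unfold SS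
  rw [← lintegral_finsetSum]
  · refine lintegral_congr fun ξ => ?_
    have : ∀ b : J → Fin (k + 1), ‖cutf {c : Fin n → Fin (k + 1) | (fun j : J => c j) = b} f ξ‖ₑ ^ s =
        if (fun j : J => cell k ξ j) = b then ‖f ξ‖ₑ ^ s else 0 := by
      intro b
      simp only [cutf, Set.mem_ofPred_eq]
      split_ifs
      · rfl
      · rw [enorm_zero, ENNReal.zero_rpow_of_pos hs]
    simp_rw [this]
    simp
  · intro b _
    exact (measurable_cutf _ f hf).enorm.pow_const _


/-- constant of the narrow part -/
noncomputable def C1 (n : ℕ) (s : ℝ) : ℝ≥0∞ :=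
  (2 : ℝ≥0∞) ^ (s - 1) * ((2 : ℝ≥0∞) ^ n) ^ (s - 1) * ((3 : ℝ≥0∞) ^ n) ^ (s - 1)

/-- constant of the broad part -/
noncomputable def C2 (n k : ℕ) (s : ℝ) : ℝ≥0∞ :=
  (2 : ℝ≥0∞) ^ (s - 1) * (((k + 1 : ℕ) : ℝ≥0∞) ^ n) ^ (s - 1)

theorem C1_lt_top (n : ℕ) (s : ℝ) (hs : 1 ≤ s) : C1 n s < ⊤ := by
  have h : 0 ≤ s - 1 := by linarith
  unfold C1
  refine ENNReal.mul_lt_top (ENNReal.mul_lt_top ?_ ?_) ?_ <;>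
    refine ENNReal.rpow_lt_top_of_nonneg h (by finiteness)

theorem C2_lt_top (n k : ℕ) (s : ℝ) (hs : 1 ≤ s) : C2 n k s < ⊤ := by
  have h : 0 ≤ s - 1 := by linarith
  unfold C2
  refine ENNReal.mul_lt_top ?_ ?_ <;>
    refine ENNReal.rpow_lt_top_of_nonneg h (by finiteness)

theorem NN_eq {n : ℕ} (lam : Fin n → Fin n) (s R : ℝ) (f : (Fin n → ℝ) → ℂ) (hf : Measurable f) :
    ∫⁻ z, ‖EE lam f z.1 z.2‖ₑ ^ s ∂(volume.prod (volume.restrict (Bx n R))) = NN lam s R f := by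
  have h : Measurable fun z : (Fin n → ℝ) × (Fin n → ℝ) => ‖EE lam f z.1 z.2‖ₑ ^ s :=
    (measurable_EE lam f hf).enorm.pow_const _
  rw [lintegral_prod_symm' _ h]
  rfl

theorem bil_cells {n : ℕ} (lam : Fin n → Fin n) (hlam : ∀ j, (lam j : ℕ) ≤ (j : ℕ)) (s : ℝ) (hs : 4 ≤ s)
    (k : ℕ) (R : ℝ) (f : (Fin n → ℝ) → ℂ) (hf : Measurable f) (hsupp : Function.support f ⊆ UU n)
    (hfin : SS s f ≠ ⊤) (c c' : Fin n → Fin (k + 1)) (hcc : ∀ j, ¬ near (c j) (c' j)) :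
    ∫⁻ z, (‖EE lam (cutf {c} f) z.1 z.2‖ₑ * ‖EE lam (cutf {c'} f) z.1 z.2‖ₑ) ^ (s / 2)
      ∂(volume.prod (volume.restrict (Bx n R))) ≤
      ENNReal.ofReal ((1 / ((k + 1 : ℕ) : ℝ)) ^ n)⁻¹ * SS s f := by
  have hs0 : 0 ≤ s := by linarith
  have hfm := measurable_cutf {c} f hf
  have hgm := measurable_cutf {c'} f hf
  have h : Measurable fun z : (Fin n → ℝ) × (Fin n → ℝ) =>
      (‖EE lam (cutf {c} f) z.1 z.2‖ₑ * ‖EE lam (cutf {c'} f) z.1 z.2‖ₑ) ^ (s / 2) :=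
    ((measurable_EE lam _ hfm).enorm.mul (measurable_EE lam _ hgm).enorm).pow_const _
  rw [lintegral_prod_symm' _ h]
  refine (setLIntegral_le_lintegral _ _).trans ?_
  have hk : (0 : ℝ) < ((k + 1 : ℕ) : ℝ) := by positivity
  refine bil_s lam hlam s hs _ _ hfm hgm (support_cutf _ f hsupp) (support_cutf _ f hsupp) (SS s f) hfin
    (SS_cutf_le s hs0 _ f) (SS_cutf_le s hs0 _ f) (fun j => if (c' j : ℕ) < c j then 1 else -1)
    (fun j => by split_ifs <;> simp) _ (by positivity) ?_
  intro ξ η hξ hη j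
  obtain ⟨h1, h2⟩ := cutf_ne _ f ξ hξ
  obtain ⟨h3, h4⟩ := cutf_ne _ f η hη
  have e1 := cell_spec k ξ (hsupp h1) j
  have e2 := cell_spec k η (hsupp h3) j
  rw [Set.mem_singleton_iff.1 h2] at e1
  rw [Set.mem_singleton_iff.1 h4] at e2
  have hj := hcc j
  unfold near at hj
  rw [div_le_iff₀ hk]
  split_ifs with hlt
  · have : (c' j : ℕ) + 2 ≤ c j := by omega
    have : ((c' j : ℕ) : ℝ) + 2 ≤ (c j : ℕ) := by exact_mod_cast this
    nlinarith
  · have : (c j : ℕ) + 2 ≤ c' j := by omega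
    have : ((c j : ℕ) : ℝ) + 2 ≤ (c' j : ℕ) := by exact_mod_cast this
    nlinarith

theorem step {n : ℕ} (lam : Fin n → Fin n) (hlam : ∀ j, (lam j : ℕ) ≤ (j : ℕ)) (s : ℝ) (hs : 4 ≤ s)
    (W : ℕ) (hW : ∀ j, (Finset.univ.filter (fun i => lam i = j)).card ≤ W) (k : ℕ) :
    ∃ B : ℝ≥0∞, B < ⊤ ∧ ∀ R A, Bd lam s R A →
      Bd lam s R (C1 n s * 2 ^ n * ENNReal.ofReal (((k + 1 : ℕ) : ℝ) ^ (-(s - 3 - W))) * A + B) := by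
  classical
  set PP := Finset.univ.filter (fun p : (Fin n → Fin (k + 1)) × (Fin n → Fin (k + 1)) => ∀ j, ¬ near (p.1 j) (p.2 j)) with hPP
  set NJ := Finset.univ.filter (fun J : Finset (Fin n) => J.Nonempty) with hNJ
  set D := ENNReal.ofReal ((1 / ((k + 1 : ℕ) : ℝ)) ^ n)⁻¹ with hD
  set θ := ENNReal.ofReal (((k + 1 : ℕ) : ℝ) ^ (-(s - 3 - W))) with hθ
  have hC1 := C1_lt_top n s (by linarith)
  have hC2 := C2_lt_top n k s (by linarith)
  refine ⟨C2 n k s * (PP.card * D), ?_, ?_⟩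
  · refine ENNReal.mul_lt_top hC2 (ENNReal.mul_lt_top (ENNReal.natCast_lt_top _) ENNReal.ofReal_lt_top)
  intro R A hA f hf hsupp hfin
  have hi := integrable_of_SS s (by linarith) f hf hsupp hfin
  have hs0 : 0 ≤ s := by linarith
  set μ := (volume : Measure (Fin n → ℝ)).prod (volume.restrict (Bx n R)) with hμ
  set gg : (J : Finset (Fin n)) → (J → Fin (k + 1)) → (Fin n → ℝ) → ℂ :=
    fun J b => cutf {c : Fin n → Fin (k + 1) | (fun j : J => c j) = b} f with hgg
  have hEgg : ∀ J b x y, EE lam (gg J b) x y = ∑ c ∈ Finset.univ.filter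
      (fun c : Fin n → Fin (k + 1) => (fun j : J => c j) = b), EE lam (cutf {c} f) x y := by
    intro J b x y
    rw [← EE_cutf lam _ f hf hi]
    simp [hgg]
  have hEf : ∀ x y, EE lam f x y = ∑ c : Fin n → Fin (k + 1), EE lam (cutf {c} f) x y := by
    intro x y
    rw [← EE_cutf lam _ f hf hi]
    congr 1
    ext ξ
    simp [cutf]
  have hpt : ∀ z : (Fin n → ℝ) × (Fin n → ℝ), ‖EE lam f z.1 z.2‖ₑ ^ s ≤
      C1 n s * ∑ J ∈ NJ, ∑ b : J → Fin (k + 1), ‖EE lam (gg J b) z.1 z.2‖ₑ ^ s +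
      C2 n k s * ∑ p ∈ PP, (‖EE lam (cutf {p.1} f) z.1 z.2‖ₑ * ‖EE lam (cutf {p.2} f) z.1 z.2‖ₑ) ^ (s / 2) := by
    intro z
    have h := broad_narrow (n := n) (K := k + 1) (by omega) (fun c => EE lam (cutf {c} f) z.1 z.2) s (by linarith)
    simp only [← hEgg] at h
    rw [← hEf] at h
    exact h
  have hmg : ∀ J b, Measurable fun z : (Fin n → ℝ) × (Fin n → ℝ) => ‖EE lam (gg J b) z.1 z.2‖ₑ ^ s :=
    fun J b => (measurable_EE lam _ (measurable_cutf _ f hf)).enorm.pow_const _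
  have hmp : ∀ p : (Fin n → Fin (k + 1)) × (Fin n → Fin (k + 1)), Measurable fun z : (Fin n → ℝ) × (Fin n → ℝ) =>
      (‖EE lam (cutf {p.1} f) z.1 z.2‖ₑ * ‖EE lam (cutf {p.2} f) z.1 z.2‖ₑ) ^ (s / 2) :=
    fun p => ((measurable_EE lam _ (measurable_cutf _ f hf)).enorm.mul
      (measurable_EE lam _ (measurable_cutf _ f hf)).enorm).pow_const _
  have hnar : ∀ J ∈ NJ, ∀ b, NN lam s R (gg J b) ≤ θ * A * SS s (gg J b) := by
    intro J hJ b
    obtain ⟨j, hj⟩ : J.Nonempty := by simpa [hNJ] using hJ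
    refine rescale lam s R hs0 W A hA j (hW j) (k + 1) (by omega) (b ⟨j, hj⟩) (gg J b)
      (measurable_cutf _ f hf) ?_ ?_
    · intro ξ hξ
      obtain ⟨h1, h2⟩ := cutf_ne _ f ξ hξ
      refine ⟨hsupp h1, ?_⟩
      have h3 := cell_spec k ξ (hsupp h1) j
      have h4 : cell k ξ j = b ⟨j, hj⟩ := congrFun h2 ⟨j, hj⟩
      rwa [h4] at h3
    · exact ((SS_cutf_le s hs0 _ f).trans_lt hfin.lt_top).ne
  calc NN lam s R f = ∫⁻ z, ‖EE lam f z.1 z.2‖ₑ ^ s ∂μ := (NN_eq lam s R f hf).symm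
    _ ≤ ∫⁻ z, (C1 n s * ∑ J ∈ NJ, ∑ b : J → Fin (k + 1), ‖EE lam (gg J b) z.1 z.2‖ₑ ^ s +
      C2 n k s * ∑ p ∈ PP, (‖EE lam (cutf {p.1} f) z.1 z.2‖ₑ * ‖EE lam (cutf {p.2} f) z.1 z.2‖ₑ) ^ (s / 2)) ∂μ :=
        lintegral_mono hpt
    _ = C1 n s * ∑ J ∈ NJ, ∑ b : J → Fin (k + 1), NN lam s R (gg J b) +
      C2 n k s * ∑ p ∈ PP, ∫⁻ z, (‖EE lam (cutf {p.1} f) z.1 z.2‖ₑ * ‖EE lam (cutf {p.2} f) z.1 z.2‖ₑ) ^ (s / 2) ∂μ := by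
        rw [lintegral_add_left, lintegral_const_mul' _ _ hC1.ne, lintegral_const_mul' _ _ hC2.ne,
          lintegral_finsetSum, lintegral_finsetSum]
        · congr 2
          refine Finset.sum_congr rfl fun J _ => ?_
          rw [lintegral_finsetSum]
          · refine Finset.sum_congr rfl fun b _ => ?_
            exact NN_eq lam s R _ (measurable_cutf _ f hf)
          · intro b _; exact hmg J b
        · intro p _; exact hmp p
        · intro J _; exact Finset.measurable_fun_sum _ fun b _ => hmg J b
        · exact (Finset.measurable_fun_sum _ fun J _ => Finset.measurable_fun_sum _ fun b _ => hmg J b).const_mul _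
    _ ≤ C1 n s * ∑ J ∈ NJ, ∑ b : J → Fin (k + 1), θ * A * SS s (gg J b) +
      C2 n k s * ∑ p ∈ PP, D * SS s f := by
        gcongr with J hJ b hb p hp
        · exact hnar J hJ b
        · exact bil_cells lam hlam s hs k R f hf hsupp hfin p.1 p.2 (by simpa [hPP] using hp)
    _ = C1 n s * (NJ.card * (θ * A * SS s f)) + C2 n k s * (PP.card * (D * SS s f)) := by
        congr 2
        · rw [← nsmul_eq_mul]
          refine Finset.sum_eq_card_nsmul fun J _ => ?_
          rw [← Finset.mul_sum, SS_cut_sum s (by linarith) J f hf]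
        · rw [Finset.sum_const, nsmul_eq_mul]
    _ ≤ C1 n s * (2 ^ n * (θ * A * SS s f)) + C2 n k s * (PP.card * (D * SS s f)) := by
        gcongr
        have : NJ.card ≤ 2 ^ n := (Finset.card_le_univ _).trans (by simp)
        exact_mod_cast this
    _ = _ := by ring

theorem main_R {n : ℕ} (lam : Fin n → Fin n) (hlam : ∀ j, (lam j : ℕ) ≤ (j : ℕ)) (s : ℝ) (hs : 4 ≤ s)
    (W : ℕ) (hW : ∀ j, (Finset.univ.filter (fun i => lam i = j)).card ≤ W) (hsW : (W : ℝ) + 3 < s) :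
    ∃ B : ℝ≥0∞, B < ⊤ ∧ ∀ R, Bd lam s R B := by
  have hC1 := C1_lt_top n s (by linarith)
  obtain ⟨k, hk⟩ : ∃ k : ℕ, C1 n s * 2 ^ n * ENNReal.ofReal (((k + 1 : ℕ) : ℝ) ^ (-(s - 3 - W))) ≤ 2⁻¹ := by
    have h1 : Filter.Tendsto (fun k : ℕ => (((k + 1 : ℕ) : ℝ) ^ (-(s - 3 - W)))) Filter.atTop (nhds 0) :=
      (tendsto_rpow_neg_atTop (by linarith)).comp
        (tendsto_natCast_atTop_atTop.comp (Filter.tendsto_add_atTop_nat 1))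
    have h2 := ENNReal.Tendsto.const_mul (a := C1 n s * 2 ^ n) (ENNReal.tendsto_ofReal h1)
      (Or.inr (ENNReal.mul_lt_top hC1 (by finiteness)).ne)
    rw [ENNReal.ofReal_zero, mul_zero] at h2
    have h3 := h2.eventually (ge_mem_nhds (show (0 : ℝ≥0∞) < 2⁻¹ by simp))
    exact h3.exists
  obtain ⟨B, hB, hstep⟩ := step lam hlam s hs W hW k
  refine ⟨2 * B, ENNReal.mul_lt_top (by simp) hB, fun R => ?_⟩
  have hmono : ∀ A A', A ≤ A' → Bd lam s R A → Bd lam s R A' := by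
    intro A A' h hA f hf h1 h2
    exact (hA f hf h1 h2).trans (by gcongr)
  have hit : ∀ m : ℕ, Bd lam s R (volume (Bx n R) * 2⁻¹ ^ m + 2 * B) := by
    intro m
    induction m with
    | zero => exact hmono _ _ (by simp) (apriori lam s R (by linarith))
    | succ m ih =>
      refine hmono _ _ ?_ (hstep R _ ih)
      calc _ ≤ 2⁻¹ * (volume (Bx n R) * 2⁻¹ ^ m + 2 * B) + B := by gcongr
        _ = volume (Bx n R) * 2⁻¹ ^ (m + 1) + ((2⁻¹ * 2) * B + B) := by ring
        _ = _ := by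
          rw [ENNReal.inv_mul_cancel (by simp) (by simp)]; ring
  have hV : volume (Bx n R) ≠ ⊤ := by
    have : Bx n R ⊆ Set.univ.pi (fun _ : Fin n => Set.Icc (-R) R) := by
      intro y hy j _
      exact abs_le.1 (hy j)
    refine ((measure_mono this).trans_lt ?_).ne
    rw [volume_pi_pi]
    simp only [Real.volume_Icc]
    exact ENNReal.prod_lt_top fun _ _ => ENNReal.ofReal_lt_top
  intro f hf h1 h2
  have ht : Filter.Tendsto (fun m : ℕ => (volume (Bx n R) * 2⁻¹ ^ m + 2 * B) * SS s f) Filter.atTop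
      (nhds ((volume (Bx n R) * 0 + 2 * B) * SS s f)) := by
    refine ENNReal.Tendsto.mul_const ?_ (Or.inr h2)
    refine Filter.Tendsto.add ?_ tendsto_const_nhds
    refine ENNReal.Tendsto.const_mul ?_ (Or.inr hV)
    exact ENNReal.tendsto_pow_atTop_nhds_zero_of_lt_one (by simp)
  rw [mul_zero, zero_add] at ht
  exact ge_of_tendsto' ht fun m => hit m f hf h1 h2

theorem main_s {n : ℕ} (lam : Fin n → Fin n) (hlam : ∀ j, (lam j : ℕ) ≤ (j : ℕ)) (s : ℝ) (hs : 4 ≤ s)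
    (W : ℕ) (hW : ∀ j, (Finset.univ.filter (fun i => lam i = j)).card ≤ W) (hsW : (W : ℝ) + 3 < s) :
    ∃ B : ℝ≥0∞, B < ⊤ ∧ ∀ f : (Fin n → ℝ) → ℂ, Measurable f → Function.support f ⊆ UU n → SS s f ≠ ⊤ →
      ∫⁻ y, ∫⁻ x, ‖EE lam f x y‖ₑ ^ s ≤ B * SS s f := by
  obtain ⟨B, hB, h⟩ := main_R lam hlam s hs W hW hsW
  refine ⟨B, hB, fun f hf h1 h2 => ?_⟩
  have hU : (⋃ m : ℕ, Bx n m) = Set.univ := by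
    refine Set.eq_univ_of_forall fun y => ?_
    obtain ⟨m, hm⟩ := exists_nat_ge (∑ i, |y i|)
    refine Set.mem_iUnion.2 ⟨m, fun i => le_trans ?_ hm⟩
    exact Finset.single_le_sum (f := fun i => |y i|) (fun i _ => abs_nonneg _) (Finset.mem_univ i)
  have hmono : Monotone fun m : ℕ => Bx n m := by
    intro m m' hmm y hy i
    exact (hy i).trans (by exact_mod_cast hmm)
  rw [← setLIntegral_univ, ← hU, setLIntegral_iUnion_of_directed _ hmono.directed_le]
  exact iSup_le fun m => h m f hf h1 h2


theorem EE_add {n : ℕ} (lam : Fin n → Fin n) (f g : (Fin n → ℝ) → ℂ) (hf : Integrable f) (hg : Integrable g)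
    (x y : Fin n → ℝ) : EE lam (fun ξ => f ξ + g ξ) x y = EE lam f x y + EE lam g x y := by
  unfold EE
  rw [← integral_add (integrable_EE lam f hf x y) (integrable_EE lam g hg x y)]
  simp only [mul_add]

theorem EE_smul {n : ℕ} (lam : Fin n → Fin n) (f : (Fin n → ℝ) → ℂ) (c : ℂ)
    (x y : Fin n → ℝ) : EE lam (fun ξ => c * f ξ) x y = c * EE lam f x y := by
  unfold EE
  rw [← integral_const_mul]
  congr 1
  ext ξ
  ring

theorem dyadic_pick (t : ℝ≥0∞) (h0 : t ≠ 0) (h1 : t ≤ 1) :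
    ∃ m : ℕ, t * 2 ^ m ≤ 1 ∧ 1 < t * 2 ^ (m + 1) := by
  classical
  have hex : ∃ m : ℕ, 1 < t * 2 ^ (m + 1) := by
    have h2 : Filter.Tendsto (fun m : ℕ => (2 : ℝ≥0∞) ^ m) Filter.atTop (nhds ⊤) :=
      ENNReal.tendsto_pow_atTop_nhds_top_iff.2 (by norm_num)
    have h3 := ENNReal.Tendsto.const_mul (a := t) h2 (Or.inl (by simp))
    rw [ENNReal.mul_top h0] at h3
    have h4 := (h3.comp (Filter.tendsto_add_atTop_nat 1)).eventually (lt_mem_nhds (show (1 : ℝ≥0∞) < ⊤ by simp))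
    exact h4.exists
  refine ⟨Nat.find hex, ?_, Nat.find_spec hex⟩
  rcases Nat.eq_zero_or_pos (Nat.find hex) with h | h
  · rw [h]; simpa using h1
  · have := Nat.find_min hex (m := Nat.find hex - 1) (by omega)
    rw [Nat.sub_add_cancel h] at this
    exact not_lt.1 this

theorem interp_norm {n : ℕ} (lam : Fin n → Fin n) (s p q : ℝ) (hp : 1 < p) (hps : p < s) (hsq : s < q)
    (hpq : (s - 1) * p < q * (p - 1)) (B : ℝ≥0∞) (hB : B < ⊤)
    (hmain : ∀ f : (Fin n → ℝ) → ℂ, Measurable f → Function.support f ⊆ UU n → SS s f ≠ ⊤ →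
      ∫⁻ y, ∫⁻ x, ‖EE lam f x y‖ₑ ^ s ≤ B * SS s f) :
    ∃ C : ℝ≥0∞, C < ⊤ ∧ ∀ f : (Fin n → ℝ) → ℂ, Measurable f → Function.support f ⊆ UU n → SS p f ≤ 1 →
      ∫⁻ y, ∫⁻ x, ‖EE lam f x y‖ₑ ^ q ≤ C := by
  set ε := (q - s) - (s - p) / (p - 1) with hε
  have hp1 : 0 < p - 1 := by linarith
  have hs0 : 0 < s := by linarith
  have hsp : 0 < s - p := by linarith
  have hqs : 0 < q - s := by linarith
  have hεpos : 0 < ε := by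
    rw [hε, sub_pos, div_lt_iff₀ hp1]
    nlinarith
  set κ : ℝ≥0∞ := 2 ^ s * B * 2 ^ (2 * ((s - p) / (p - 1))) with hκ
  have h2top : ∀ t : ℝ, (2 : ℝ≥0∞) ^ t ≠ ⊤ := fun t =>
    ENNReal.rpow_ne_top_of_ne_zero (by simp) (by simp)
  have hr : (2 : ℝ≥0∞) ^ (-ε) < 1 := ENNReal.rpow_lt_one_of_one_lt_of_neg (by norm_num) (by linarith)
  refine ⟨∑' m : ℕ, κ * ((2 : ℝ≥0∞) ^ (-ε)) ^ m, ?_, ?_⟩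
  · rw [ENNReal.tsum_mul_left, ENNReal.tsum_geometric]
    refine ENNReal.mul_lt_top ?_ ?_
    · exact ENNReal.mul_lt_top (ENNReal.mul_lt_top (h2top _).lt_top hB) (h2top _).lt_top
    · rw [ENNReal.inv_lt_top]
      exact tsub_pos_of_lt hr
  intro f hf hsupp hf1
  have hfin : SS p f ≠ ⊤ := (hf1.trans_lt (by simp)).ne
  have hi := integrable_of_SS p hp.le f hf hsupp hfin
  set H : ℕ → ℝ≥0∞ := fun m => (2 : ℝ≥0∞) ^ (((m : ℝ) + 2) / (p - 1)) with hH
  set S : ℕ → Set (Fin n → ℝ) := fun m => {ξ | ‖f ξ‖ₑ ≤ H m} with hS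
  have hSm : ∀ m, MeasurableSet (S m) := fun m => measurableSet_le hf.enorm measurable_const
  set g : ℕ → (Fin n → ℝ) → ℂ := fun m => (S m).indicator f with hg
  set b : ℕ → (Fin n → ℝ) → ℂ := fun m => (S m)ᶜ.indicator f with hb
  have hgm : ∀ m, Measurable (g m) := fun m => hf.indicator (hSm m)
  have hgs : ∀ m, Function.support (g m) ⊆ UU n := fun m =>
    (by
      intro ξ hξ
      refine hsupp fun h => hξ ?_
      simp [hg, Set.indicator_apply, h])
  have hgi : ∀ m, Integrable (g m) := fun m => hi.indicator (hSm m)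
  have hbi : ∀ m, Integrable (b m) := fun m => hi.indicator (hSm m).compl
  have hsum : ∀ m, f = fun ξ => g m ξ + b m ξ := by
    intro m
    exact (Set.indicator_self_add_compl (S m) f).symm
  have hgS : ∀ m, SS s (g m) ≤ H m ^ (s - p) := by
    intro m
    calc SS s (g m) ≤ ∫⁻ ξ, ‖f ξ‖ₑ ^ p * H m ^ (s - p) := by
          refine lintegral_mono fun ξ => ?_
          by_cases h : ξ ∈ S m
          · simp only [hg, Set.indicator_of_mem h]
            have : ‖f ξ‖ₑ ^ s = ‖f ξ‖ₑ ^ p * ‖f ξ‖ₑ ^ (s - p) := by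
              rw [← ENNReal.rpow_add_of_nonneg _ _ (by linarith) hsp.le]; congr 1; ring
            rw [this]
            gcongr
            exact h
          · simp only [hg, Set.indicator_of_notMem h]
            rw [enorm_zero, ENNReal.zero_rpow_of_pos hs0]
            exact zero_le
      _ = SS p f * H m ^ (s - p) := by
          rw [lintegral_mul_const]
          · rfl
          · exact hf.enorm.pow_const _
      _ ≤ 1 * H m ^ (s - p) := by gcongr
      _ = _ := one_mul _
  have hbS : ∀ m, (∫⁻ ξ, ‖b m ξ‖ₑ) * 2 ^ (m + 2) ≤ 1 := by
    intro m
    have e : (2 : ℝ≥0∞) ^ (m + 2) = H m ^ (p - 1) := by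
      rw [hH]
      simp only
      rw [← ENNReal.rpow_mul, div_mul_cancel₀ _ hp1.ne', ← ENNReal.rpow_natCast]
      congr 1
      push_cast; ring
    rw [e, ← lintegral_mul_const]
    · refine le_trans (lintegral_mono fun ξ => ?_) hf1
      by_cases h : ξ ∈ S m
      · have : b m ξ = 0 := by simp [hb, h]
        rw [this]; simp
      · have : b m ξ = f ξ := by simp [hb, h]
        rw [this]
        have h3 : H m ≤ ‖f ξ‖ₑ := (not_le.1 h).le
        calc ‖f ξ‖ₑ * H m ^ (p - 1) ≤ ‖f ξ‖ₑ ^ (1 : ℝ) * ‖f ξ‖ₑ ^ (p - 1) := by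
              rw [ENNReal.rpow_one]; gcongr
          _ = ‖f ξ‖ₑ ^ p := by
              rw [← ENNReal.rpow_add_of_nonneg _ _ (by linarith) hp1.le]; congr 1; ring
    · exact (hf.indicator (hSm m).compl).enorm
  have hle1 : ∀ x y, ‖EE lam f x y‖ₑ ≤ 1 := by
    intro x y
    refine (enorm_EE_le lam f x y).trans ?_
    rw [← SS_one]
    refine (SS_mono 1 p one_pos hp.le f hf hsupp).trans ?_
    exact ENNReal.rpow_le_one hf1 (by positivity)
  have hpt : ∀ x y, ‖EE lam f x y‖ₑ ^ q ≤
      ∑' m : ℕ, ((2 : ℝ≥0∞) ^ (-((m : ℝ) * (q - s))) * 2 ^ s) * ‖EE lam (g m) x y‖ₑ ^ s := by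
    intro x y
    set t := ‖EE lam f x y‖ₑ with ht
    by_cases h0 : t = 0
    · rw [h0, ENNReal.zero_rpow_of_pos (by linarith)]; exact zero_le
    obtain ⟨m, hm1, hm2⟩ := dyadic_pick t h0 (hle1 x y)
    refine le_trans ?_ (ENNReal.le_tsum m)
    set u := ‖EE lam (g m) x y‖ₑ with hu
    set v := ‖EE lam (b m) x y‖ₑ with hv
    have htop : t ≠ ⊤ := ((hle1 x y).trans_lt (by simp)).ne
    have htuv : t ≤ u + v := by
      rw [ht, hsum m, EE_add lam _ _ (hgi m) (hbi m)]
      exact enorm_add_le _ _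
    have hv1 : v * 2 ^ (m + 2) ≤ 1 := le_trans (by gcongr; exact enorm_EE_le lam _ x y) (hbS m)
    have hvt : 2 * v ≤ t := by
      have h5 : (2 * v) * 2 ^ (m + 1) ≤ t * 2 ^ (m + 1) := by
        refine le_trans ?_ hm2.le
        calc (2 * v) * 2 ^ (m + 1) = v * 2 ^ (m + 2) := by ring
          _ ≤ 1 := hv1
      exact (ENNReal.mul_le_mul_iff_left (by simp) (by finiteness)).1 h5
    have htu : t ≤ 2 * u := by
      have h6 : t + t ≤ 2 * u + t := by
        calc t + t = 2 * t := by ring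
          _ ≤ 2 * (u + v) := by gcongr
          _ = 2 * u + 2 * v := by ring
          _ ≤ _ := by gcongr
      exact (ENNReal.add_le_add_iff_right htop).1 h6
    have htm : t ≤ (2 : ℝ≥0∞) ^ (-(m : ℝ)) := by
      rw [ENNReal.rpow_neg, ENNReal.rpow_natCast]
      exact ENNReal.le_inv_iff_mul_le.2 hm1
    calc t ^ q = t ^ (q - s) * t ^ s := by
          rw [← ENNReal.rpow_add_of_nonneg _ _ hqs.le hs0.le]; congr 1; ring
      _ ≤ ((2 : ℝ≥0∞) ^ (-(m : ℝ))) ^ (q - s) * (2 * u) ^ s := by gcongr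
      _ = _ := by
          rw [← ENNReal.rpow_mul, ENNReal.mul_rpow_of_nonneg _ _ hs0.le, mul_assoc, neg_mul]
  calc ∫⁻ y, ∫⁻ x, ‖EE lam f x y‖ₑ ^ q
      ≤ ∫⁻ y, ∫⁻ x, ∑' m : ℕ, ((2 : ℝ≥0∞) ^ (-((m : ℝ) * (q - s))) * 2 ^ s) * ‖EE lam (g m) x y‖ₑ ^ s :=
        lintegral_mono fun y => lintegral_mono fun x => hpt x y
    _ = ∑' m : ℕ, ((2 : ℝ≥0∞) ^ (-((m : ℝ) * (q - s))) * 2 ^ s) * ∫⁻ y, ∫⁻ x, ‖EE lam (g m) x y‖ₑ ^ s := by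
        have e : ∀ y, ∫⁻ x, ∑' m : ℕ, ((2 : ℝ≥0∞) ^ (-((m : ℝ) * (q - s))) * 2 ^ s) * ‖EE lam (g m) x y‖ₑ ^ s =
            ∑' m : ℕ, ((2 : ℝ≥0∞) ^ (-((m : ℝ) * (q - s))) * 2 ^ s) * ∫⁻ x, ‖EE lam (g m) x y‖ₑ ^ s := by
          intro y
          rw [lintegral_tsum]
          · congr 1; ext m
            rw [lintegral_const_mul _ (measurable_inner' lam s _ (hgm m) y)]
          · intro m
            exact ((measurable_inner' lam s _ (hgm m) y).const_mul _).aemeasurable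
        simp_rw [e]
        rw [lintegral_tsum]
        · congr 1; ext m
          rw [lintegral_const_mul _ (measurable_inner lam s _ (hgm m))]
        · intro m
          exact ((measurable_inner lam s _ (hgm m)).const_mul _).aemeasurable
    _ ≤ ∑' m : ℕ, κ * ((2 : ℝ≥0∞) ^ (-ε)) ^ m := by
        refine ENNReal.tsum_le_tsum fun m => ?_
        have hHt : H m ^ (s - p) ≠ ⊤ := by
          rw [hH]; simp only; rw [← ENNReal.rpow_mul]; exact h2top _
        have h7 := hmain (g m) (hgm m) (hgs m) ((hgS m).trans_lt hHt.lt_top).ne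
        calc _ ≤ ((2 : ℝ≥0∞) ^ (-((m : ℝ) * (q - s))) * 2 ^ s) * (B * H m ^ (s - p)) := by
              gcongr
              exact h7.trans (by gcongr; exact hgS m)
          _ = 2 ^ s * B * ((2 : ℝ≥0∞) ^ (-((m : ℝ) * (q - s))) * H m ^ (s - p)) := by ring
          _ = κ * ((2 : ℝ≥0∞) ^ (-ε)) ^ m := by
              rw [hκ, mul_assoc (2 ^ s * B)]
              congr 1
              rw [hH]
              simp only
              rw [← ENNReal.rpow_mul, ← ENNReal.rpow_natCast, ← ENNReal.rpow_mul,
                ← ENNReal.rpow_add _ _ (by simp) (by simp), ← ENNReal.rpow_add _ _ (by simp) (by simp)]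
              congr 1
              rw [hε]
              field_simp
              ring

theorem interp {n : ℕ} (lam : Fin n → Fin n) (s p q : ℝ) (hp : 1 < p) (hps : p < s) (hsq : s < q)
    (hpq : (s - 1) * p < q * (p - 1)) (B : ℝ≥0∞) (hB : B < ⊤)
    (hmain : ∀ f : (Fin n → ℝ) → ℂ, Measurable f → Function.support f ⊆ UU n → SS s f ≠ ⊤ →
      ∫⁻ y, ∫⁻ x, ‖EE lam f x y‖ₑ ^ s ≤ B * SS s f) :
    ∃ C : ℝ≥0∞, C < ⊤ ∧ ∀ f : (Fin n → ℝ) → ℂ, Measurable f → Function.support f ⊆ UU n →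
      (∫⁻ y, ∫⁻ x, ‖EE lam f x y‖ₑ ^ q) ^ (1 / q) ≤ C * SS p f ^ (1 / p) := by
  obtain ⟨C, hC, h⟩ := interp_norm lam s p q hp hps hsq hpq B hB hmain
  have hq0 : 0 < q := by linarith
  have hp0 : 0 < p := by linarith
  refine ⟨C ^ (1 / q) + 1, ?_, ?_⟩
  · exact ENNReal.add_lt_top.2 ⟨ENNReal.rpow_lt_top_of_nonneg (by positivity) hC.ne, by simp⟩
  intro f hf hsupp
  set a := SS p f ^ (1 / p) with ha
  have hap : a ^ p = SS p f := by
    rw [ha, ← ENNReal.rpow_mul, one_div_mul_cancel hp0.ne', ENNReal.rpow_one]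
  by_cases htop : a = ⊤
  · rw [htop, ENNReal.mul_top (by simp)]; exact le_top
  by_cases h0 : a = 0
  · have hS0 : SS p f = 0 := by rw [← hap, h0, ENNReal.zero_rpow_of_pos hp0]
    have h1 : (∫⁻ ξ, ‖f ξ‖ₑ) = 0 := by
      have := SS_mono 1 p one_pos hp.le f hf hsupp
      rw [hS0, ENNReal.zero_rpow_of_pos (by positivity), SS_one] at this
      exact le_antisymm this (zero_le)
    have h2 : ∀ x y, ‖EE lam f x y‖ₑ ^ q = 0 := by
      intro x y
      have := enorm_EE_le lam f x y
      rw [h1] at this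
      rw [le_antisymm this (zero_le), ENNReal.zero_rpow_of_pos hq0]
    simp only [h2, lintegral_zero]
    rw [ENNReal.zero_rpow_of_pos (by positivity)]
    exact zero_le
  set c : ℂ := ((a⁻¹).toReal : ℂ) with hc
  have hcn : ‖c‖ₑ = a⁻¹ := by
    rw [hc, ← ofReal_norm, Complex.norm_real, Real.norm_of_nonneg ENNReal.toReal_nonneg,
      ENNReal.ofReal_toReal (ENNReal.inv_ne_top.2 h0)]
  have h1 := h (fun ξ => c * f ξ) (hf.const_mul c) (fun ξ hξ => hsupp (right_ne_zero_of_mul hξ)) (by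
    unfold SS
    simp_rw [enorm_mul, ENNReal.mul_rpow_of_nonneg _ _ hp0.le]
    rw [lintegral_const_mul _ (hf.enorm.pow_const _)]
    change ‖c‖ₑ ^ p * SS p f ≤ 1
    rw [hcn, ← hap, ← ENNReal.mul_rpow_of_nonneg _ _ hp0.le, ENNReal.inv_mul_cancel h0 htop, ENNReal.one_rpow])
  simp_rw [EE_smul, enorm_mul, ENNReal.mul_rpow_of_nonneg _ _ hq0.le] at h1
  have hct : ‖c‖ₑ ^ q ≠ ⊤ := by
    rw [hcn]; exact ENNReal.rpow_ne_top_of_nonneg hq0.le (ENNReal.inv_ne_top.2 h0)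
  simp_rw [lintegral_const_mul' _ _ hct] at h1
  have h2 := ENNReal.rpow_le_rpow h1 (show 0 ≤ 1 / q by positivity)
  rw [ENNReal.mul_rpow_of_nonneg _ _ (by positivity), ← ENNReal.rpow_mul, mul_one_div_cancel hq0.ne',
    ENNReal.rpow_one, hcn] at h2
  have h3 := (ENNReal.inv_mul_le_iff h0 htop).1 h2
  refine h3.trans ?_
  rw [mul_comm]
  gcongr
  exact le_self_add

theorem UU_ae_Icc (n : ℕ) : UU n =ᵐ[volume] Set.Icc (0 : Fin n → ℝ) 1 := by
  have : UU n = Set.univ.pi (fun i : Fin n => Set.Ico ((0 : Fin n → ℝ) i) ((1 : Fin n → ℝ) i)) := by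
    ext ξ; simp [UU]
  rw [this]
  exact Measure.univ_pi_Ico_ae_eq_Icc

theorem indicator_ae {n : ℕ} (f : (Fin n → ℝ) → ℂ) (hsupp : Function.support f ⊆ Set.Icc 0 1) :
    (UU n).indicator f =ᵐ[volume] f := by
  have h := indicator_ae_eq_of_ae_eq_set (f := f) (UU_ae_Icc n)
  rwa [Set.indicator_eq_self.2 hsupp] at h

theorem extOp_eq {n : ℕ} (lam : Fin n → Fin n) (f : (Fin n → ℝ) → ℂ)
    (hsupp : Function.support f ⊆ Set.Icc 0 1) (X : Fin (n + n) → ℝ) :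
    extOp n n (fun ξ j => ξ (lam j) * ξ j) f X =
      EE lam ((UU n).indicator f) (fun i => X (Fin.castAdd n i)) (fun j => X (Fin.natAdd n j)) := by
  unfold extOp EE
  rw [setIntegral_eq_integral_of_forall_compl_eq_zero]
  · refine integral_congr_ae ?_
    filter_upwards [indicator_ae f hsupp] with ξ hξ
    rw [hξ]
    rfl
  · intro ξ hξ
    have : f ξ = 0 := by
      by_contra h
      exact hξ (hsupp h)
    rw [this, mul_zero]

theorem lintegral_split {n : ℕ} (G : (Fin n → ℝ) → (Fin n → ℝ) → ℝ≥0∞)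
    (hG : Measurable fun z : (Fin n → ℝ) × (Fin n → ℝ) => G z.1 z.2) :
    ∫⁻ X : Fin (n + n) → ℝ, G (fun i => X (Fin.castAdd n i)) (fun j => X (Fin.natAdd n j)) =
      ∫⁻ y, ∫⁻ x, G x y := by
  have hG' : Measurable fun X : Fin n ⊕ Fin n → ℝ => G (fun i => X (Sum.inl i)) (fun j => X (Sum.inr j)) := by
    have h : Measurable fun X : Fin n ⊕ Fin n → ℝ => ((fun i => X (Sum.inl i), fun j => X (Sum.inr j)) :
      (Fin n → ℝ) × (Fin n → ℝ)) := by fun_prop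
    exact hG.comp h
  have h := lintegral_sum_pi _ hG'
  have hmp := volume_measurePreserving_piCongrLeft (fun _ : Fin (n + n) => ℝ) (finSumFinEquiv (m := n) (n := n))
  rw [← hmp.lintegral_comp_emb (MeasurableEquiv.measurableEmbedding _)]
  refine Eq.trans ?_ h
  refine lintegral_congr fun X => ?_
  have e : ∀ a, (MeasurableEquiv.piCongrLeft (fun _ : Fin (n + n) => ℝ) (finSumFinEquiv (m := n) (n := n))) X
      (finSumFinEquiv a) = X a := fun a => MeasurableEquiv.piCongrLeft_apply_apply _ _ _
  congr 1
  · ext i; exact e (Sum.inl i)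
  · ext i; exact e (Sum.inr i)

theorem eLpNorm_UU_mono {n : ℕ} (g : (Fin n → ℝ) → ℂ) (hg : Measurable g) (hs : Function.support g ⊆ UU n)
    (p p' : ℝ≥0∞) (h : p' ≤ p) : eLpNorm g p' volume ≤ eLpNorm g p volume := by
  have hpr : IsProbabilityMeasure (volume.restrict (UU n)) := ⟨by simp [volume_UU]⟩
  rw [← eLpNorm_restrict_eq_of_support_subset hs, ← eLpNorm_restrict_eq_of_support_subset hs (p := p)]
  exact eLpNorm_le_eLpNorm_of_exponent_le h hg.aestronglyMeasurable

/-- sharp restriction estimates for the monomial surfaces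
`Q_j(ξ) = ξ_{λ_j} ξ_j` with `λ_j ≤ j` (here all indices are 0-indexed). -/
theorem statement0 (n : ℕ) (hn : 2 ≤ n)
    (lam : Fin n → Fin n) (hlam : ∀ j, (lam j : ℕ) ≤ (j : ℕ))
    (w : Fin n → ℕ)
    (hw : ∀ j, w j = (Finset.univ.filter (fun i => lam i = j)).card)
    (p q : ℝ≥0∞) (hp : 1 ≤ p) (hq : 1 ≤ q)
    (hq3 : ((Finset.univ.sup w : ℕ) : ℝ≥0∞) + 3 < q)
    (hpq : 1 / p + (((Finset.univ.sup w : ℕ) : ℝ≥0∞) + 2) / q < 1) :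
    ∃ C : ℝ≥0∞, C < ⊤ ∧
      ∀ f : (Fin n → ℝ) → ℂ, Measurable f →
        Function.support f ⊆ Set.Icc 0 1 →
        eLpNorm (extOp n n (fun ξ j => ξ (lam j) * ξ j) f) q volume ≤
          C * eLpNorm f p volume := by
  set W := Finset.univ.sup w with hWdef
  have hW : ∀ j, (Finset.univ.filter (fun i => lam i = j)).card ≤ W := by
    intro j
    rw [← hw j]
    exact Finset.le_sup (Finset.mem_univ j)
  have hW1 : 1 ≤ W := by
    refine le_trans ?_ (hW ⟨0, by omega⟩)
    rw [Nat.one_le_iff_ne_zero, ← Nat.pos_iff_ne_zero, Finset.card_pos]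
    refine ⟨⟨0, by omega⟩, ?_⟩
    simp only [Finset.mem_filter, Finset.mem_univ, true_and]
    apply Fin.ext
    have := hlam ⟨0, by omega⟩
    simpa using this
  suffices hmain : ∃ C : ℝ≥0∞, C < ⊤ ∧ ∀ g : (Fin n → ℝ) → ℂ, Measurable g → Function.support g ⊆ UU n →
      eLpNorm (fun X : Fin (n + n) → ℝ => EE lam g (fun i => X (Fin.castAdd n i)) (fun j => X (Fin.natAdd n j)))
        q volume ≤ C * eLpNorm g p volume by
    obtain ⟨C, hC, h⟩ := hmain
    refine ⟨C, hC, fun f hf hsupp => ?_⟩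
    have h1 := h ((UU n).indicator f) (hf.indicator (measurableSet_UU n)) Set.support_indicator_subset
    rw [eLpNorm_congr_ae (indicator_ae f hsupp)] at h1
    have h2 : extOp n n (fun ξ j => ξ (lam j) * ξ j) f = fun X : Fin (n + n) → ℝ =>
        EE lam ((UU n).indicator f) (fun i => X (Fin.castAdd n i)) (fun j => X (Fin.natAdd n j)) :=
      funext fun X => extOp_eq lam f hsupp X
    rw [h2]
    exact h1
  by_cases hqt : q = ⊤
  · refine ⟨1, by simp, fun g hg hs => ?_⟩
    rw [hqt, one_mul, eLpNorm_exponent_top]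
    refine eLpNormEssSup_le_of_ae_enorm_bound (Filter.Eventually.of_forall fun X => ?_)
    refine (enorm_EE_le lam g _ _).trans ?_
    rw [← eLpNorm_one_eq_lintegral_enorm]
    exact eLpNorm_UU_mono g hg hs p 1 hp
  -- finite exponent
  set Q := q.toReal with hQ
  have hqQ : q = ENNReal.ofReal Q := (ENNReal.ofReal_toReal hqt).symm
  have hQ3 : (W : ℝ) + 3 < Q := by
    have := ENNReal.toReal_strict_mono hqt hq3
    rwa [ENNReal.toReal_add (by simp) (by simp), ENNReal.toReal_natCast, ENNReal.toReal_ofNat] at this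
  have hW1' : (1 : ℝ) ≤ W := by exact_mod_cast hW1
  have hQ0 : 0 < Q := by linarith
  set u := (1 / p).toReal with hu
  have hup : 1 / p = ENNReal.ofReal u := by
    refine (ENNReal.ofReal_toReal ?_).symm
    rw [one_div]
    exact ENNReal.inv_ne_top.2 (one_pos.trans_le hp).ne'
  have hu0 : 0 ≤ u := ENNReal.toReal_nonneg
  have huQ : u + ((W : ℝ) + 2) / Q < 1 := by
    have := ENNReal.toReal_strict_mono (by simp) hpq
    rw [ENNReal.toReal_add (hup ▸ ENNReal.ofReal_ne_top)
      (ENNReal.div_lt_top (by finiteness) (one_pos.trans_le hq).ne').ne, ENNReal.toReal_div _ q,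
      ENNReal.toReal_add (by simp) (by simp), ENNReal.toReal_natCast, ENNReal.toReal_ofNat,
      ENNReal.toReal_one] at this
    exact this
  have hu1 : (W : ℝ) + 2 < Q * (1 - u) := by
    have : ((W : ℝ) + 2) / Q < 1 - u := by linarith
    rw [div_lt_iff₀ hQ0] at this
    linarith
  obtain ⟨s', hs1, hs2⟩ := exists_between (lt_min (show (W : ℝ) + 2 < Q - 1 by linarith) hu1)
  obtain ⟨hs2, hs3⟩ := lt_min_iff.1 hs2
  set s := s' + 1 with hs
  have hs0 : 0 < s := by linarith
  have hsQ : s < Q := by linarith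
  have hsu : u < 1 - (s - 1) / Q := by
    have : (s - 1) / Q < 1 - u := by
      rw [div_lt_iff₀ hQ0, hs]; linarith
    linarith
  have hss : 1 / s < 1 - (s - 1) / Q := by
    have h1 : (s - 1) / Q < (s - 1) / s := by
      apply div_lt_div_of_pos_left <;> linarith
    have h2 : (s - 1) / s = 1 - 1 / s := by field_simp
    linarith
  obtain ⟨v, hv1, hv2⟩ := exists_between (max_lt hsu hss)
  obtain ⟨huv, hsv⟩ := max_lt_iff.1 hv1
  have hv0 : 0 < v := by linarith
  have hv1 : v < 1 := by
    have : 0 < (s - 1) / Q := div_pos (by linarith) hQ0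
    linarith
  set r := 1 / v with hr
  have hr1 : 1 < r := by rw [hr, lt_div_iff₀ hv0]; linarith
  have hrs : r < s := by
    rw [hr, div_lt_iff₀ hv0]
    rw [div_lt_iff₀ hs0] at hsv
    linarith
  have hrp : ENNReal.ofReal r ≤ p := by
    rw [← ENNReal.inv_le_inv, ← one_div, hup, ← ENNReal.ofReal_inv_of_pos (by linarith)]
    refine ENNReal.ofReal_le_ofReal ?_
    rw [hr, one_div, inv_inv]
    exact huv.le
  have hcond : (s - 1) * r < Q * (r - 1) := by
    have h1 : (s - 1) / Q < 1 - v := by linarith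
    rw [div_lt_iff₀ hQ0] at h1
    have h2 : r * v = 1 := by rw [hr]; field_simp
    have h3 : 0 < r := by linarith
    nlinarith [mul_lt_mul_of_pos_right h1 h3]
  obtain ⟨B, hB, hBm⟩ := main_s lam hlam s (by linarith) W hW (by linarith)
  obtain ⟨C, hC, hCm⟩ := interp lam s r Q hr1 hrs hsQ hcond B hB hBm
  refine ⟨C, hC, fun g hg hgs => ?_⟩
  refine le_trans ?_ (mul_le_mul_right (eLpNorm_UU_mono g hg hgs p _ hrp) C)
  have hr0 : 0 < r := by linarith
  rw [eLpNorm_eq_lintegral_rpow_enorm_toReal (one_pos.trans_le hq).ne' hqt,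
    eLpNorm_eq_lintegral_rpow_enorm_toReal (by simpa using hr0) ENNReal.ofReal_ne_top,
    ENNReal.toReal_ofReal hr0.le]
  have hsp := lintegral_split (fun x y => ‖EE lam g x y‖ₑ ^ Q) ((measurable_EE lam g hg).enorm.pow_const _)
  rw [← hQ, hsp]
  exact hCm g hg hgs
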